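/- Consider the stochastic regression model X_{n+1} = θ^t Φ_n + ε_{n+1} with least squares estimator θ̂_n. Let p ≥ 1 be an integer and assume (ε_n) is a martingale difference sequence with E[ε_{n+1}² | F_n] = σ² a.s. and sup_{n≥0} E[|ε_{n+1}|^a | F_n] < ∞ a.s. for some a > 2p, the explosion coefficient f_n → 0 a.s., and S_n/n → L a.s. for some symmetric positive definite d×d matrix L. Then almost surely lim_{n→∞} (1/log n) Σ_{k=1}^n k^{p−1} ((θ̂_k − θ)^t L (θ̂_k − θ))^p = ℓ(p), where ℓ(p) = d σ^{2p} ∏_{j=1}^{p-1} (d + 2j); in particular the cumulative estimation error G_n(p) = Σ_{k=1}^n k^{p−1} ‖θ̂_k − θ‖^{2p} satisfies G_n(p) = O(log n) almost surely. -/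

import Mathlib

/-!
With `A k = S_{k-1}`, the process `N k = A k *ᵥ (θ̂ k - θ)` is, up to the constant `-Sθ`, a vector
martingale driven by the noise. Consider its energies `N kᵗ W k N k` for three decreasing
predictable weights, all asymptotic to `L⁻¹ / k`: `L⁻¹ / (k + 1)`, `L⁻¹` divided by a trace clock,
and `(A k)⁻¹`. Put `u = Nᵗ L⁻¹ N / (k + 1)`, `φ = Φᵗ L⁻¹ Φ / (k + 1)` and
`γ = Φᵗ L⁻¹ N / (k + 1)`. To first order the noise injects the same amount into all three energies,
whereas their losses are `u / k`, `φ u / d` and `γ ^ 2` respectively. Comparing the balances of the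
powers of the energies therefore gives `∑ φ u ^ m ≈ d ∑ u ^ m / k` and
`∑ γ ^ 2 u ^ (m - 1) ≈ ∑ u ^ m / k` up to `o(log n)`. Inserting this into any one of the balances
yields the recursion `c (m + 1) = σ ^ 2 (d + 2 m) c m` for the limit `c m` of
`(∑ u ^ m / k) / log n`. The a priori bounds `O(log n)` come from the trace clock through a
Robbins–Siegmund argument and Chow's theorem.
-/

open MeasureTheory ProbabilityTheory Filter Finset Matrix Topology Asymptotics

noncomputable section

/-- `S_n = S + ∑_{k=0}^n Φ_k Φ_kᵗ`. -/
def Smat {Ω : Type*} {d : ℕ} (S : Matrix (Fin d) (Fin d) ℝ)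
    (Φ : ℕ → Ω → Fin d → ℝ) (n : ℕ) (ω : Ω) : Matrix (Fin d) (Fin d) ℝ :=
  S + ∑ k ∈ Finset.range (n + 1), vecMulVec (Φ k ω) (Φ k ω)

/-- The explosion coefficient `f_n = Φ_nᵗ S_n⁻¹ Φ_n`. -/
def expl {Ω : Type*} {d : ℕ} (S : Matrix (Fin d) (Fin d) ℝ)
    (Φ : ℕ → Ω → Fin d → ℝ) (n : ℕ) (ω : Ω) : ℝ :=
  Φ n ω ⬝ᵥ ((Smat S Φ n ω)⁻¹ *ᵥ Φ n ω)

/-- The least squares estimator `θ̂_n = S_{n-1}⁻¹ ∑_{k=1}^n Φ_{k-1} X_k`. -/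
def lsq {Ω : Type*} {d : ℕ} (S : Matrix (Fin d) (Fin d) ℝ)
    (Φ : ℕ → Ω → Fin d → ℝ) (X : ℕ → Ω → ℝ) (n : ℕ) (ω : Ω) : Fin d → ℝ :=
  (Smat S Φ (n - 1) ω)⁻¹ *ᵥ ∑ k ∈ Finset.Icc 1 n, X k ω • Φ (k - 1) ω

section MartingaleDiff

variable {Ω : Type*} {m0 : MeasurableSpace Ω} {μ : Measure Ω} {F : Filtration ℕ m0}
  {D D' : ℕ → Ω → ℝ}

/-- Martingale difference sequences, indexed by the beginning of the step: `D k` is the increment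
from time `k` to time `k + 1`. -/
structure IsMartingaleDiff (F : Filtration ℕ m0) (μ : Measure Ω) (D : ℕ → Ω → ℝ) : Prop where
  stronglyMeasurable : ∀ k, StronglyMeasurable[F (k + 1)] (D k)
  integrable : ∀ k, Integrable (D k) μ
  condExp_eq_zero : ∀ k, μ[D k|F k] =ᵐ[μ] 0

/-- Martingale transforms `∑ H_k η_k` of a martingale difference sequence `η` by an adapted weight
`H`, represented by their increments `D k = H k * η k`. No integrability is imposed on `H`, so these
are the increments of the discrete-time local martingales. -/
def IsMartingaleTransform (F : Filtration ℕ m0) (μ : Measure Ω) (D : ℕ → Ω → ℝ) : Prop :=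
  ∃ H η : ℕ → Ω → ℝ, (∀ k, StronglyMeasurable[F k] (H k)) ∧ IsMartingaleDiff F μ η ∧
    D = fun k ω => H k ω * η k ω

namespace IsMartingaleDiff

lemma add (hD : IsMartingaleDiff F μ D) (hD' : IsMartingaleDiff F μ D') :
    IsMartingaleDiff F μ (D + D') where
  stronglyMeasurable k := (hD.stronglyMeasurable k).add (hD'.stronglyMeasurable k)
  integrable k := (hD.integrable k).add (hD'.integrable k)
  condExp_eq_zero k := by
    filter_upwards [condExp_add (hD.integrable k) (hD'.integrable k) (F k),
      hD.condExp_eq_zero k, hD'.condExp_eq_zero k] with ω h h₁ h₂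
    simpa [h₁, h₂] using h

lemma of_bounded_mul [IsFiniteMeasure μ] {H : ℕ → Ω → ℝ} {B : ℕ → ℝ} (hD : IsMartingaleDiff F μ D)
    (hH : ∀ k, StronglyMeasurable[F k] (H k)) (hB : ∀ k ω, |H k ω| ≤ B k) :
    IsMartingaleDiff F μ (fun k ω => H k ω * D k ω) where
  stronglyMeasurable k := ((hH k).mono (F.mono k.le_succ)).mul (hD.stronglyMeasurable k)
  integrable k := (hD.integrable k).bdd_mul ((hH k).mono (F.le k)).aestronglyMeasurable
    (Eventually.of_forall (hB k))
  condExp_eq_zero k := by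
    filter_upwards [condExp_stronglyMeasurable_mul_of_bound (F.le k) (hH k) (hD.integrable k) (B k)
      (Eventually.of_forall (hB k)), hD.condExp_eq_zero k] with ω h h₀
    exact h.trans (by simp [h₀])

lemma sub_condExp [IsFiniteMeasure μ] {ξ : ℕ → Ω → ℝ}
    (hm : ∀ k, StronglyMeasurable[F (k + 1)] (ξ k)) (hi : ∀ k, Integrable (ξ k) μ) :
    IsMartingaleDiff F μ (fun k => ξ k - μ[ξ k|F k]) where
  stronglyMeasurable k := (hm k).sub (stronglyMeasurable_condExp.mono (F.mono k.le_succ))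
  integrable k := (hi k).sub integrable_condExp
  condExp_eq_zero k := by
    have h := condExp_sub (hi k) (integrable_condExp (μ := μ) (m := F k) (f := ξ k)) (F k)
    rwa [condExp_of_stronglyMeasurable (F.le k) stronglyMeasurable_condExp integrable_condExp,
      sub_self] at h

lemma martingale_sum [IsFiniteMeasure μ] (hD : IsMartingaleDiff F μ D) :
    Martingale (fun n => ∑ k ∈ range n, D k) F μ := by
  refine martingale_of_condExp_sub_eq_zero_nat (fun n => ?_)
    (fun n => integrable_finsetSum' _ fun k _ => hD.integrable k) fun n => ?_
  · exact Finset.stronglyMeasurable_sum _ fun k hk =>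
      (hD.stronglyMeasurable k).mono (F.mono (mem_range.1 hk))
  · rw [sum_range_succ, add_sub_cancel_left]
    exact hD.condExp_eq_zero n

lemma integral_sum_eq_zero [IsFiniteMeasure μ] (hD : IsMartingaleDiff F μ D) (n : ℕ) :
    ∫ ω, ∑ k ∈ range n, D k ω ∂μ = 0 := by
  rw [integral_finsetSum _ fun k _ => hD.integrable k]
  refine sum_eq_zero fun k _ => ?_
  rw [← integral_condExp (F.le k), integral_congr_ae (hD.condExp_eq_zero k)]
  simp

lemma ae_exists_tendsto_sum_of_ge [IsFiniteMeasure μ] {K : ℝ} (hD : IsMartingaleDiff F μ D)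
    (hK : ∀ n, ∀ᵐ ω ∂μ, -K ≤ ∑ k ∈ range n, D k ω) :
    ∀ᵐ ω ∂μ, ∃ l, Tendsto (fun n => ∑ k ∈ range n, D k ω) atTop (𝓝 l) := by
  have hM := hD.martingale_sum
  have hbound (n : ℕ) : ∫ ω, ‖(∑ k ∈ range n, D k) ω‖ ∂μ ≤ μ.real Set.univ * (2 * |K|) := by
    calc ∫ ω, ‖(∑ k ∈ range n, D k) ω‖ ∂μ ≤ ∫ ω, (∑ k ∈ range n, D k ω + 2 * |K|) ∂μ := by
          refine integral_mono_ae (hM.integrable n).norm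
            ((integrable_finsetSum _ fun k _ => hD.integrable k).add (integrable_const _)) ?_
          filter_upwards [hK n] with ω hω
          rw [Finset.sum_apply, Real.norm_eq_abs, abs_le]
          constructor <;> linarith [le_abs_self K, abs_nonneg K]
      _ = μ.real Set.univ * (2 * |K|) := by
          rw [integral_add (integrable_finsetSum _ fun k _ => hD.integrable k)
            (integrable_const _), hD.integral_sum_eq_zero n]
          simp
  filter_upwards [hM.submartingale.ae_tendsto_limitProcess
    (R := (μ.real Set.univ * (2 * |K|)).toNNReal) fun n => by
      rw [eLpNorm_one_eq_lintegral_enorm, ← ofReal_integral_norm_eq_lintegral_enorm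
        (hM.integrable n)]
      exact ENNReal.ofReal_le_ofReal (hbound n)] with ω hω
  simp only [Finset.sum_apply] at hω
  exact ⟨_, hω⟩

lemma isMartingaleTransform (hD : IsMartingaleDiff F μ D) : IsMartingaleTransform F μ D :=
  ⟨1, D, fun _ => stronglyMeasurable_one, hD, by simp⟩

end IsMartingaleDiff

namespace IsMartingaleTransform

lemma adapted_mul {H : ℕ → Ω → ℝ} (hD : IsMartingaleTransform F μ D)
    (hH : ∀ k, StronglyMeasurable[F k] (H k)) :
    IsMartingaleTransform F μ (fun k ω => H k ω * D k ω) := by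
  obtain ⟨G, η, hG, hη, rfl⟩ := hD
  exact ⟨fun k ω => H k ω * G k ω, η, fun k => (hH k).mul (hG k), hη, by simp only [mul_assoc]⟩

lemma stronglyMeasurable (hD : IsMartingaleTransform F μ D) (k : ℕ) :
    StronglyMeasurable[F (k + 1)] (D k) := by
  obtain ⟨H, η, hH, hη, rfl⟩ := hD
  exact ((hH k).mono (F.mono k.le_succ)).mul (hη.stronglyMeasurable k)

lemma add [IsFiniteMeasure μ] (hD : IsMartingaleTransform F μ D)
    (hD' : IsMartingaleTransform F μ D') :
    IsMartingaleTransform F μ (fun k ω => D k ω + D' k ω) := by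
  obtain ⟨H, η, hH, hη, rfl⟩ := hD
  obtain ⟨H', η', hH', hη', rfl⟩ := hD'
  -- The common weight `W` makes both `H / W` and `H' / W` bounded.
  let W : ℕ → Ω → ℝ := fun k ω => 1 + |H k ω| + |H' k ω|
  have hW k : StronglyMeasurable[F k] (W k) :=
    (stronglyMeasurable_const.add (hH k).norm).add (hH' k).norm
  have hWpos k ω : 0 < W k ω := by positivity
  refine ⟨W, _, hW,
    (hη.of_bounded_mul (H := fun k ω => H k ω / W k ω) (B := 1)
      (fun k => ((hH k).measurable.div (hW k).measurable).stronglyMeasurable) fun k ω => ?_).add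
    (hη'.of_bounded_mul (H := fun k ω => H' k ω / W k ω) (B := 1)
      (fun k => ((hH' k).measurable.div (hW k).measurable).stronglyMeasurable) fun k ω => ?_), ?_⟩
  · rw [abs_div, abs_of_pos (hWpos k ω), Pi.one_apply, div_le_one (hWpos k ω)]
    linarith [abs_nonneg (H' k ω)]
  · rw [abs_div, abs_of_pos (hWpos k ω), Pi.one_apply, div_le_one (hWpos k ω)]
    linarith [abs_nonneg (H k ω)]
  · ext k ω
    have := (hWpos k ω).ne'
    simp only [Pi.add_apply]
    field_simp

lemma sum [IsFiniteMeasure μ] {ι : Type*} (s : Finset ι) {D : ι → ℕ → Ω → ℝ}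
    (hD : ∀ i ∈ s, IsMartingaleTransform F μ (D i)) :
    IsMartingaleTransform F μ (fun k ω => ∑ i ∈ s, D i k ω) := by
  classical
  induction s using Finset.induction_on with
  | empty =>
    exact ⟨0, 0, fun _ => stronglyMeasurable_zero,
      ⟨fun _ => stronglyMeasurable_zero, fun _ => integrable_zero _ _ _, fun _ => by simp⟩,
      by ext; simp⟩
  | insert i s his ih =>
    simp only [sum_insert his]
    exact (hD i (mem_insert_self i s)).add (ih fun j hj => hD j (mem_insert_of_mem hj))

end IsMartingaleTransform

lemma exists_forall_measure_lt_le [IsFiniteMeasure μ] {h : ℕ → Ω → ℝ} (hm : ∀ k, Measurable (h k))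
    {δ : ℕ → ENNReal} (hδ : ∀ k, 0 < δ k) : ∃ B : ℕ → ℕ, ∀ k, μ {ω | B k < h k ω} ≤ δ k := by
  suffices ∀ k, ∃ B : ℕ, μ {ω | B < h k ω} ≤ δ k from ⟨_, fun k => (this k).choose_spec⟩
  intro k
  have hanti : Antitone fun B : ℕ => {ω | (B : ℝ) < h k ω} := fun a b hab =>
    Set.ofPred_subset_ofPred.2 fun ω hω => (Nat.cast_le.2 hab).trans_lt hω
  have hinter : ⋂ B : ℕ, {ω | (B : ℝ) < h k ω} = ∅ := by
    ext ω
    simpa using exists_nat_ge (h k ω)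
  have hlim := tendsto_measure_iInter_atTop (μ := μ)
    (fun B : ℕ => (measurableSet_lt measurable_const (hm k)).nullMeasurableSet) hanti
    ⟨0, measure_ne_top _ _⟩
  rw [hinter, measure_empty] at hlim
  exact (hlim.eventually (Iic_mem_nhds (hδ k))).exists

lemma exists_ae_exists_forall_le_add [IsFiniteMeasure μ] {h : ℕ → Ω → ℝ}
    (hm : ∀ k, Measurable (h k)) :
    ∃ B : ℕ → ℝ, ∀ᵐ ω ∂μ, ∃ K : ℕ, ∀ k, h k ω ≤ B k + K := by
  obtain ⟨δ, hδ, hsum⟩ := ENNReal.exists_pos_sum_of_countable' one_ne_zero ℕ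
  obtain ⟨B, hB⟩ := exists_forall_measure_lt_le (μ := μ) hm hδ
  refine ⟨fun k => B k, ?_⟩
  filter_upwards [ae_eventually_notMem (μ := μ) (s := fun k => {ω | (B k : ℝ) < h k ω})
    ((ENNReal.tsum_le_tsum hB).trans_lt (hsum.trans ENNReal.one_lt_top)).ne] with ω hω
  obtain ⟨n, hn⟩ := eventually_atTop.1 hω
  obtain ⟨K, hK⟩ := exists_nat_ge (∑ k ∈ range n, |h k ω|)
  refine ⟨K, fun k => ?_⟩
  obtain hk | hk := le_or_gt n k
  · have : h k ω ≤ B k := by simpa using hn k hk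
    linarith [K.cast_nonneg (α := ℝ)]
  · have := single_le_sum (f := fun k => |h k ω|) (fun _ _ => abs_nonneg _) (mem_range.2 hk)
    linarith [le_abs_self (h k ω), (B k).cast_nonneg (α := ℝ)]

lemma measurableSet_forall_le {h : ℕ → Ω → ℝ} (hm : ∀ k, StronglyMeasurable[F k] (h k))
    (c : ℕ → ℝ) (k : ℕ) : MeasurableSet[F k] {ω | ∀ i ≤ k, h i ω ≤ c i} := by
  have : {ω | ∀ i ≤ k, h i ω ≤ c i} = ⋂ i ∈ Set.Iic k, {ω | h i ω ≤ c i} := by ext; simp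
  rw [this]
  exact MeasurableSet.biInter (Set.to_countable _) fun i hi =>
    measurableSet_le ((hm i).mono (F.mono hi)).measurable measurable_const

lemma neg_le_sum_ite_of_antitone {D Λ : ℕ → ℝ} {G : ℕ → Prop} [DecidablePred G] {K : ℝ} (hK : 0 ≤ K)
    (hG : Antitone G) (hΛ : ∀ k, G k → Λ k ≤ K) (hD : ∀ n, -Λ n ≤ ∑ k ∈ range (n + 1), D k)
    (n : ℕ) : -K ≤ ∑ k ∈ range n, if G k then D k else 0 := by
  induction n with
  | zero => simpa
  | succ n ih =>
    by_cases hn : G n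
    · rw [sum_congr rfl fun k hk => if_pos (hG (mem_range_succ_iff.1 hk) hn)]
      linarith [hΛ n hn, hD n]
    · rwa [sum_range_succ, if_neg hn, add_zero]

namespace IsMartingaleTransform

/-- Localization: on the event that the weight and the lower bound have stayed below deterministic
levels, the transform is a martingale bounded below. -/
theorem ae_exists_tendsto_sum_of_ge [IsFiniteMeasure μ] {Λ : ℕ → Ω → ℝ}
    (hD : IsMartingaleTransform F μ D) (hΛm : ∀ k, StronglyMeasurable[F k] (Λ k))
    (hΛ : ∀ᵐ ω ∂μ, ∃ C, ∀ k, Λ k ω ≤ C)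
    (hlow : ∀ᵐ ω ∂μ, ∀ n, -Λ n ω ≤ ∑ k ∈ range (n + 1), D k ω) :
    ∀ᵐ ω ∂μ, ∃ l, Tendsto (fun n => ∑ k ∈ range n, D k ω) atTop (𝓝 l) := by
  classical
  obtain ⟨H, η, hH, hη, rfl⟩ := hD
  obtain ⟨B, hB⟩ := exists_ae_exists_forall_le_add (μ := μ)
    (fun k => ((hH k).norm.mono (F.le k)).measurable)
  let G (K k : ℕ) : Set Ω := {ω | ∀ i ≤ k, ‖H i ω‖ ≤ B i + K} ∩ {ω | ∀ i ≤ k, Λ i ω ≤ K}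
  have hGm K k : MeasurableSet[F k] (G K k) :=
    (measurableSet_forall_le (fun k => (hH k).norm) _ k).inter (measurableSet_forall_le hΛm _ k)
  have hstopped (K : ℕ) : ∀ᵐ ω ∂μ, ∃ l,
      Tendsto (fun n => ∑ k ∈ range n, (G K k).indicator (H k) ω * η k ω) atTop (𝓝 l) := by
    have hdiff := hη.of_bounded_mul (B := fun k => |B k + K|)
      (fun k => (hH k).indicator (hGm K k)) fun k ω => by
        by_cases hω : ω ∈ G K k
        · rw [Set.indicator_of_mem hω]
          exact (hω.1 k le_rfl).trans (le_abs_self _)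
        · simp [hω]
    refine hdiff.ae_exists_tendsto_sum_of_ge (K := K) fun n => ?_
    filter_upwards [hlow] with ω hω
    convert neg_le_sum_ite_of_antitone (G := fun k => ω ∈ G K k) K.cast_nonneg
      (fun i j hij hj => ⟨fun l hl => hj.1 l (hl.trans hij), fun l hl => hj.2 l (hl.trans hij)⟩)
      (fun k hk => hk.2 k le_rfl) hω n using 2 with k
    simp only [Set.indicator_apply, ite_mul, zero_mul]
  filter_upwards [ae_all_iff.2 hstopped, hΛ, hB] with ω hω ⟨C, hC⟩ ⟨K₁, hK₁⟩
  obtain ⟨K₂, hK₂⟩ := exists_nat_ge C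
  have hmem k : ω ∈ G (max K₁ K₂) k := by
    refine ⟨fun i _ => (hK₁ i).trans ?_, fun i _ => (hC i).trans (hK₂.trans ?_)⟩
    · gcongr
      exact le_max_left _ _
    · gcongr
      exact le_max_right _ _
  simpa [Set.indicator_of_mem (hmem _)] using hω (max K₁ K₂)

end IsMartingaleTransform

lemma exists_tendsto_and_summable_of_add_le {z a c : ℕ → ℝ} {l : ℝ} (hz : ∀ k, 0 ≤ z k)
    (ha : ∀ k, 0 ≤ a k) (hc : Tendsto (fun n => ∑ k ∈ range n, c k) atTop (𝓝 l))
    (hrec : ∀ k, z (k + 1) + a k ≤ z k + c k) :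
    (∃ l, Tendsto z atTop (𝓝 l)) ∧ Summable a := by
  let w n := z n + ∑ k ∈ range n, a k - ∑ k ∈ range n, c k
  have hanti : Antitone w := antitone_nat_of_succ_le fun n => by
    simp only [w, sum_range_succ]
    linarith [hrec n]
  obtain ⟨C, hC⟩ := hc.bddAbove_range
  have hbdd : BddBelow (Set.range w) := by
    refine ⟨-C, ?_⟩
    rintro _ ⟨n, rfl⟩
    simp only [w]
    linarith [hC ⟨n, rfl⟩, hz n, sum_nonneg fun k (_ : k ∈ range n) => ha k]
  have hsum : Summable a := summable_of_sum_range_le (c := w 0 + C) ha fun n => by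
    have h₁ := hanti n.zero_le
    have h₂ : ∑ k ∈ range n, c k ≤ C := hC ⟨n, rfl⟩
    simp only [w] at h₁ ⊢
    linarith [hz n]
  refine ⟨⟨_, (((tendsto_atTop_ciInf hanti hbdd).add hc).sub
    hsum.hasSum.tendsto_sum_nat).congr fun n => ?_⟩, hsum⟩
  simp only [w]
  ring

/-- **Robbins–Siegmund theorem**. -/
theorem ae_exists_tendsto_and_summable_of_add_le [IsFiniteMeasure μ] {Z a b : ℕ → Ω → ℝ}
    (hZm : StronglyMeasurable[F 0] (Z 0)) (hbm : ∀ k, StronglyMeasurable[F k] (b k))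
    (hZ : ∀ k ω, 0 ≤ Z k ω) (ha : ∀ k ω, 0 ≤ a k ω) (hb : ∀ᵐ ω ∂μ, Summable fun k => b k ω)
    (hD : IsMartingaleTransform F μ D)
    (hrec : ∀ᵐ ω ∂μ, ∀ k, Z (k + 1) ω + a k ω ≤ Z k ω + b k ω + D k ω) :
    ∀ᵐ ω ∂μ, (∃ l, Tendsto (fun n => Z n ω) atTop (𝓝 l)) ∧ Summable fun k => a k ω := by
  have hDlim : ∀ᵐ ω ∂μ, ∃ l, Tendsto (fun n => ∑ k ∈ range n, D k ω) atTop (𝓝 l) := by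
    refine hD.ae_exists_tendsto_sum_of_ge (Λ := fun n ω => Z 0 ω + ∑ k ∈ range (n + 1), b k ω)
      (fun n => (hZm.mono (F.mono n.zero_le)).add ?_) ?_ ?_
    · exact Finset.stronglyMeasurable_fun_sum _ fun k hk =>
        (hbm k).mono (F.mono (mem_range_succ_iff.1 hk))
    · filter_upwards [hb] with ω hω
      obtain ⟨C, hC⟩ := hω.hasSum.tendsto_sum_nat.bddAbove_range
      exact ⟨Z 0 ω + C, fun k => by gcongr; exact hC ⟨_, rfl⟩⟩
    · filter_upwards [hrec] with ω hω n
      have htelescope : Z (n + 1) ω - Z 0 ω ≤ ∑ k ∈ range (n + 1), (b k ω + D k ω) := by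
        rw [← sum_range_sub (fun k => Z k ω)]
        exact sum_le_sum fun k _ => by linarith [hω k, ha k ω]
      rw [sum_add_distrib] at htelescope
      linarith [hZ (n + 1) ω]
  filter_upwards [hrec, hDlim, hb] with ω hrec ⟨l, hl⟩ hb
  refine exists_tendsto_and_summable_of_add_le (c := fun k => b k ω + D k ω) (fun k => hZ k ω)
    (fun k => ha k ω) ((hb.hasSum.tendsto_sum_nat.add hl).congr fun n => ?_)
    fun k => by linarith [hrec k]
  rw [sum_add_distrib]

section SqrtOneAddSq

lemma one_le_sqrt_one_add_sq (x : ℝ) : 1 ≤ √(1 + x ^ 2) :=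
  Real.one_le_sqrt.2 (by linarith [sq_nonneg x])

lemma abs_div_sqrt_one_add_sq_le_one (x : ℝ) : |x / √(1 + x ^ 2)| ≤ 1 := by
  rw [abs_div, abs_of_nonneg (Real.sqrt_nonneg _),
    div_le_one (zero_lt_one.trans_le (one_le_sqrt_one_add_sq x)), ← Real.sqrt_sq_eq_abs]
  exact Real.sqrt_le_sqrt (by linarith)

lemma sqrt_one_add_add_sq_le_add_sq (x y : ℝ) :
    √(1 + (x + y) ^ 2) ≤ √(1 + x ^ 2) + x / √(1 + x ^ 2) * y + y ^ 2 := by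
  have hs := one_le_sqrt_one_add_sq x
  have hc := abs_div_sqrt_one_add_sq_le_one x
  have hs2 : √(1 + x ^ 2) ^ 2 = 1 + x ^ 2 := Real.sq_sqrt (by positivity)
  have hcs : x / √(1 + x ^ 2) * √(1 + x ^ 2) = x := div_mul_cancel₀ _ (by positivity)
  generalize √(1 + x ^ 2) = s at *
  generalize x / s = c at *
  obtain ⟨hc₁, hc₂⟩ := abs_le.1 hc
  refine Real.sqrt_le_iff.2 ⟨by nlinarith [sq_nonneg (y + c / 2)], ?_⟩
  have hexpand : (s + c * y + y ^ 2) ^ 2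
      = s ^ 2 + 2 * (c * s) * y + 2 * s * y ^ 2 + (c * y + y ^ 2) ^ 2 := by ring
  rw [hexpand, hcs, hs2]
  nlinarith [sq_nonneg (c * y + y ^ 2), mul_le_mul_of_nonneg_right hs (sq_nonneg y)]

lemma sqrt_one_add_add_sq_le_add_abs (x y : ℝ) :
    √(1 + (x + y) ^ 2) ≤ √(1 + x ^ 2) + x / √(1 + x ^ 2) * y + 2 * |y| := by
  have hlip : √(1 + (x + y) ^ 2) ≤ √(1 + x ^ 2) + |y| := by
    have hxs : |x| ≤ √(1 + x ^ 2) := Real.abs_le_sqrt (by linarith)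
    have hxy : x * y ≤ √(1 + x ^ 2) * |y| :=
      (le_abs_self _).trans ((abs_mul x y).trans_le (by gcongr))
    refine Real.sqrt_le_iff.2 ⟨by positivity, ?_⟩
    nlinarith [sq_abs y, Real.sq_sqrt (show (0 : ℝ) ≤ 1 + x ^ 2 by positivity)]
  have hlin : |x / √(1 + x ^ 2) * y| ≤ |y| := by
    rw [abs_mul]
    exact mul_le_of_le_one_left (abs_nonneg _) (abs_div_sqrt_one_add_sq_le_one x)
  linarith [neg_abs_le (x / √(1 + x ^ 2) * y)]

lemma sqrt_one_add_add_sq_le_add_rpow (x y : ℝ) {r : ℝ} (hr₁ : 1 ≤ r) (hr₂ : r ≤ 2) :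
    √(1 + (x + y) ^ 2) ≤ √(1 + x ^ 2) + x / √(1 + x ^ 2) * y + 2 * |y| ^ r := by
  obtain hy | hy := le_total |y| 1
  · have : y ^ 2 ≤ |y| ^ r := by
      rw [← sq_abs, ← Real.rpow_natCast]
      exact Real.rpow_le_rpow_of_exponent_ge' (abs_nonneg y) hy (by linarith) (by simpa using hr₂)
    linarith [sqrt_one_add_add_sq_le_add_sq x y, sq_nonneg y]
  · linarith [sqrt_one_add_add_sq_le_add_abs x y, Real.self_le_rpow_of_one_le hy hr₁]

end SqrtOneAddSq

/-- Robbins–Siegmund for the function `√(1 + x²)` of the partial sums. -/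
theorem IsMartingaleTransform.ae_exists_tendsto_sum_of_rpow_le [IsFiniteMeasure μ]
    {b : ℕ → Ω → ℝ} {r : ℝ} (hr₁ : 1 ≤ r) (hr₂ : r ≤ 2) (hD : IsMartingaleTransform F μ D)
    (hD' : IsMartingaleTransform F μ D') (hbm : ∀ k, StronglyMeasurable[F k] (b k))
    (hb : ∀ᵐ ω ∂μ, Summable fun k => b k ω)
    (hle : ∀ᵐ ω ∂μ, ∀ k, |D k ω| ^ r ≤ b k ω + D' k ω) :
    ∀ᵐ ω ∂μ, ∃ l, Tendsto (fun n => ∑ k ∈ range n, D k ω) atTop (𝓝 l) := by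
  let M (c : ℝ) (n : ℕ) (ω : Ω) : ℝ := c + ∑ k ∈ range n, D k ω
  have hM c n : StronglyMeasurable[F n] (M c n) := stronglyMeasurable_const.add
    (Finset.stronglyMeasurable_fun_sum _ fun k hk =>
      (hD.stronglyMeasurable k).mono (F.mono (mem_range.1 hk)))
  have hlim (c : ℝ) : ∀ᵐ ω ∂μ, ∃ l, Tendsto (fun n => M c n ω ^ 2) atTop (𝓝 l) := by
    have hφm n : StronglyMeasurable[F n] (fun ω => √(1 + M c n ω ^ 2)) :=
      (((hM c n).measurable.pow_const 2).const_add 1).sqrt.stronglyMeasurable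
    have hRS := ae_exists_tendsto_and_summable_of_add_le
      (Z := fun n ω => √(1 + M c n ω ^ 2)) (a := fun _ _ => 0) (hφm 0)
      (fun k => (hbm k).const_mul 2) (fun _ _ => Real.sqrt_nonneg _)
      (fun _ _ => le_rfl) (hb.mono fun ω h => h.mul_left 2)
      ((hD.adapted_mul fun k => ((hM c k).measurable.div (hφm k).measurable).stronglyMeasurable).add
        (hD'.adapted_mul fun _ => stronglyMeasurable_const (b := (2 : ℝ)))) (by
        filter_upwards [hle] with ω hω k
        have hstep : M c (k + 1) ω = M c k ω + D k ω := by simp only [M, sum_range_succ, add_assoc]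
        have := sqrt_one_add_add_sq_le_add_rpow (M c k ω) (D k ω) hr₁ hr₂
        rw [hstep]
        simp only [Pi.div_apply]
        linarith [hω k])
    filter_upwards [hRS] with ω hω
    obtain ⟨l, hl⟩ := hω.1
    refine ⟨_, ((hl.pow 2).sub_const 1).congr fun n => ?_⟩
    rw [Real.sq_sqrt (by positivity), add_sub_cancel_left]
  filter_upwards [hlim 0, hlim 1] with ω ⟨l₀, h₀⟩ ⟨l₁, h₁⟩
  refine ⟨_, (((h₁.sub h₀).sub_const 1).div_const 2).congr fun n => ?_⟩
  simp only [M]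
  ring

lemma abs_mul_sub_rpow_le {h x y r : ℝ} (hr₁ : 1 ≤ r) (hr₂ : r ≤ 2) :
    |h * (x - y)| ^ r ≤ 2 * |h| ^ r * (|x| ^ r + |y| ^ r) := by
  have hadd : (|x| + |y|) ^ r ≤ 2 ^ (r - 1) * (|x| ^ r + |y| ^ r) := by
    have := NNReal.rpow_add_le_mul_rpow_add_rpow ‖x‖₊ ‖y‖₊ hr₁
    exact_mod_cast this
  have htwo : (2 : ℝ) ^ (r - 1) ≤ 2 := by
    simpa using Real.rpow_le_rpow_of_exponent_le one_le_two (show r - 1 ≤ 1 by linarith)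
  calc |h * (x - y)| ^ r = |h| ^ r * |x - y| ^ r := by
        rw [abs_mul, Real.mul_rpow (abs_nonneg _) (abs_nonneg _)]
    _ ≤ |h| ^ r * (2 * (|x| ^ r + |y| ^ r)) := by
        gcongr
        exact (Real.rpow_le_rpow (abs_nonneg _) (abs_sub _ _) (by linarith)).trans
          (hadd.trans (by gcongr))
    _ = 2 * |h| ^ r * (|x| ^ r + |y| ^ r) := by ring

lemma stronglyMeasurable_abs_rpow {m : MeasurableSpace Ω} {f : Ω → ℝ}
    (hf : StronglyMeasurable[m] f) (r : ℝ) : StronglyMeasurable[m] (fun ω => |f ω| ^ r) :=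
  (Measurable.pow_const (f := fun ω => |f ω|) hf.norm.measurable r).stronglyMeasurable

/-- **Chow's theorem**, with the conditional moments of order `r` bounded along each path. -/
theorem ae_exists_tendsto_sum_mul_sub_condExp [IsFiniteMeasure μ] {ξ H : ℕ → Ω → ℝ} {r : ℝ}
    (hr₁ : 1 ≤ r) (hr₂ : r ≤ 2)
    (hξm : ∀ k, StronglyMeasurable[F (k + 1)] (ξ k)) (hξi : ∀ k, Integrable (ξ k) μ)
    (hξr : ∀ k, Integrable (fun ω => |ξ k ω| ^ r) μ)
    (hξb : ∀ᵐ ω ∂μ, ∃ C, ∀ k, (μ[fun ω => |ξ k ω| ^ r | F k]) ω ≤ C)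
    (hH : ∀ k, StronglyMeasurable[F k] (H k)) (hHs : ∀ᵐ ω ∂μ, Summable fun k => |H k ω| ^ r) :
    ∀ᵐ ω ∂μ, ∃ l, Tendsto (fun n => ∑ k ∈ range n, H k ω * (ξ k ω - (μ[ξ k|F k]) ω))
      atTop (𝓝 l) := by
  let Y (k : ℕ) : Ω → ℝ := fun ω => |ξ k ω| ^ r
  have hHr k : StronglyMeasurable[F k] (fun ω => |H k ω| ^ r) :=
    stronglyMeasurable_abs_rpow (hH k) r
  have hYm k : StronglyMeasurable[F (k + 1)] (Y k) :=
    stronglyMeasurable_abs_rpow (hξm k) r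
  have hJensen : ∀ᵐ ω ∂μ, ∀ k, |(μ[ξ k|F k]) ω| ^ r ≤ (μ[Y k|F k]) ω :=
    ae_all_iff.2 fun k => by
      have h := Integrable.norm_condExp_rpow_le (m := F k) (μ := μ) (f := ξ k) hr₁
      simp only [Real.norm_eq_abs] at h
      exact h (hξr k)
  have hD := (IsMartingaleDiff.sub_condExp hξm hξi).isMartingaleTransform.adapted_mul hH
  have hD' := (IsMartingaleDiff.sub_condExp hYm hξr).isMartingaleTransform.adapted_mul
    fun k => (hHr k).const_mul 2
  refine hD.ae_exists_tendsto_sum_of_rpow_le hr₁ hr₂ hD'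
    (b := fun k ω => 4 * |H k ω| ^ r * (μ[Y k|F k]) ω)
    (fun k => ((hHr k).const_mul 4).mul stronglyMeasurable_condExp) ?_ ?_
  · filter_upwards [hHs, hξb, hJensen] with ω hs ⟨C, hC⟩ hJ
    have hY0 k : 0 ≤ (μ[Y k|F k]) ω := (Real.rpow_nonneg (abs_nonneg _) _).trans (hJ k)
    exact Summable.of_nonneg_of_le (fun k => mul_nonneg (by positivity) (hY0 k))
      (fun k => by gcongr; exact hC k) ((hs.mul_left 4).mul_right C)
  · filter_upwards [hJensen] with ω hJ k
    refine (abs_mul_sub_rpow_le hr₁ hr₂).trans ?_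
    have := mul_le_mul_of_nonneg_left (hJ k) (show 0 ≤ 2 * |H k ω| ^ r by positivity)
    simp only [Pi.sub_apply, Y] at this ⊢
    linarith

end MartingaleDiff

section Scale

/-- Normalizing sequences, to be compared with cumulative sums. The bound by `1` spares
positivity side conditions. -/
structure IsScale (ℓ : ℕ → ℝ) : Prop where
  one_le : ∀ n, 1 ≤ ℓ n
  monotone : Monotone ℓ
  tendsto_atTop : Tendsto ℓ atTop atTop

namespace IsScale

variable {ℓ x y w : ℕ → ℝ}

lemma pos (hℓ : IsScale ℓ) (n : ℕ) : 0 < ℓ n := zero_lt_one.trans_le (hℓ.one_le n)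

lemma nonneg (hℓ : IsScale ℓ) (n : ℕ) : 0 ≤ ℓ n := (hℓ.pos n).le

lemma const_isLittleO (hℓ : IsScale ℓ) (c : ℝ) : (fun _ : ℕ => c) =o[atTop] ℓ :=
  isLittleO_const_left.2 (Or.inr (tendsto_norm_atTop_atTop.comp hℓ.tendsto_atTop))

lemma exists_forall_abs_le (hℓ : IsScale ℓ) (hx : x =O[atTop] ℓ) :
    ∃ C, 0 < C ∧ ∀ n, |x n| ≤ C * ℓ n := by
  obtain ⟨C, hC⟩ := (isBigO_nat_atTop_iff fun n hn => absurd hn (hℓ.pos n).ne').1 hx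
  refine ⟨max C 1, by positivity, fun n => (hC n).trans ?_⟩
  rw [Real.norm_of_nonneg (hℓ.nonneg n)]
  exact mul_le_mul_of_nonneg_right (le_max_left _ _) (hℓ.nonneg n)

lemma sum_range_sub_isBigO (hℓ : IsScale ℓ) :
    (fun n => ∑ k ∈ range n, (ℓ (k + 1) - ℓ k)) =O[atTop] ℓ := by
  simp only [sum_range_sub]
  exact (isBigO_refl _ _).sub (hℓ.const_isLittleO (ℓ 0)).isBigO

lemma sum_isLittleO (hℓ : IsScale ℓ) (hw : ∀ k, 0 ≤ w k)
    (hsum : (fun n => ∑ k ∈ range n, w k) =O[atTop] ℓ) (hx : x =o[atTop] w) :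
    (fun n => ∑ k ∈ range n, x k) =o[atTop] ℓ := by
  -- The increments of `ℓ` are added to `w` to make its partial sums diverge.
  have hw' k : 0 ≤ w k + (ℓ (k + 1) - ℓ k) :=
    add_nonneg (hw k) (sub_nonneg.2 (hℓ.monotone k.le_succ))
  have hxw : x =o[atTop] fun k => w k + (ℓ (k + 1) - ℓ k) :=
    hx.trans_le fun k => by
      rw [Real.norm_of_nonneg (hw k), Real.norm_of_nonneg (hw' k)]
      linarith [hℓ.monotone k.le_succ]
  refine (hxw.sum_range hw' ?_).trans_isBigO ?_
  · refine tendsto_atTop_mono (f := fun n => ℓ n + -ℓ 0) (fun n => ?_)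
      (tendsto_atTop_add_const_right _ _ hℓ.tendsto_atTop)
    rw [sum_add_distrib, sum_range_sub]
    linarith [sum_nonneg fun k (_ : k ∈ range n) => hw k]
  · simp only [sum_add_distrib]
    exact hsum.add hℓ.sum_range_sub_isBigO

lemma sum_isBigO (hℓ : IsScale ℓ) (hw : ∀ k, 0 ≤ w k)
    (hsum : (fun n => ∑ k ∈ range n, w k) =O[atTop] ℓ) (hx : x =O[atTop] w) :
    (fun n => ∑ k ∈ range n, x k) =O[atTop] ℓ := by
  obtain ⟨C, hC⟩ := hx.bound
  obtain ⟨m, hm⟩ := eventually_atTop.1 hC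
  refine IsBigO.trans (IsBigO.of_bound 1 (eventually_atTop.2 ⟨m, fun n hn => ?_⟩))
    ((hℓ.const_isLittleO (∑ k ∈ range m, |x k|)).isBigO.add (hsum.const_mul_left |C|))
  rw [one_mul]
  refine le_trans ?_ (Real.le_norm_self _)
  calc ‖∑ k ∈ range n, x k‖ ≤ ∑ k ∈ range n, |x k| := norm_sum_le _ _
    _ = ∑ k ∈ range m, |x k| + ∑ k ∈ Ico m n, |x k| := (sum_range_add_sum_Ico _ hn).symm
    _ ≤ ∑ k ∈ range m, |x k| + ∑ k ∈ range n, |C| * w k := by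
        gcongr
        refine (sum_le_sum fun k hk => (hm k (mem_Ico.1 hk).1).trans ?_).trans
          (sum_le_sum_of_subset_of_nonneg (fun k hk => mem_range.2 (mem_Ico.1 hk).2)
            fun k _ _ => mul_nonneg (abs_nonneg C) (hw k))
        rw [Real.norm_of_nonneg (hw k)]
        exact mul_le_mul_of_nonneg_right (le_abs_self C) (hw k)
    _ = ∑ k ∈ range m, |x k| + |C| * ∑ k ∈ range n, w k := by rw [mul_sum]

/-- Kronecker's lemma. -/
lemma sum_isLittleO_of_tendsto_sum_div (hℓ : IsScale ℓ) {b : ℝ}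
    (hx : Tendsto (fun n => ∑ k ∈ range n, x k / ℓ (k + 1)) atTop (𝓝 b)) :
    (fun n => ∑ k ∈ range n, x k) =o[atTop] ℓ := by
  let B n := ∑ k ∈ range n, x k / ℓ (k + 1)
  have hB : (fun n => B n - b) =o[atTop] fun _ => (1 : ℝ) :=
    (isLittleO_one_iff ℝ).2 (by simpa using hx.sub_const b)
  have habel n : ∑ k ∈ range n, x k
      = ℓ n * (B n - b) + b * ℓ 0 - ∑ k ∈ range n, (ℓ (k + 1) - ℓ k) * (B k - b) := by
    induction n with
    | zero => simp [B, mul_comm]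
    | succ n ih =>
      have hn : x n = ℓ (n + 1) * (B (n + 1) - B n) := by
        simp only [B, sum_range_succ, add_sub_cancel_left, mul_div_cancel₀ _ (hℓ.pos (n + 1)).ne']
      rw [sum_range_succ, ih, sum_range_succ, hn]
      ring
  have hboundary : (fun n => ℓ n * (B n - b)) =o[atTop] ℓ := by
    simpa using (isBigO_refl ℓ atTop).mul_isLittleO hB
  have hinterior : (fun n => ∑ k ∈ range n, (ℓ (k + 1) - ℓ k) * (B k - b)) =o[atTop] ℓ :=
    hℓ.sum_isLittleO (fun k => sub_nonneg.2 (hℓ.monotone k.le_succ)) hℓ.sum_range_sub_isBigO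
      (by simpa using (isBigO_refl (fun k => ℓ (k + 1) - ℓ k) atTop).mul_isLittleO hB)
  exact ((hboundary.add (hℓ.const_isLittleO (b * ℓ 0))).sub hinterior).congr_left
    fun n => (habel n).symm

/-- Discretized linear relaxation `y' = a (r - y)`. -/
lemma isLittleO_of_relaxation (hℓ : IsScale ℓ) {a r : ℕ → ℝ} (ha₀ : ∀ᶠ n in atTop, 0 ≤ a n)
    (ha₁ : ∀ᶠ n in atTop, a n ≤ 1) (hr : r =o[atTop] ℓ)
    (hy : ∀ n, y (n + 1) = (1 - a n) * y n + a n * r n) : y =o[atTop] ℓ := by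
  refine isLittleO_iff.2 fun c hc => ?_
  obtain ⟨m, hm⟩ := eventually_atTop.1 ((ha₀.and ha₁).and (hr.def (half_pos hc)))
  let K := |y m|
  -- The excess of `|y|` over `c / 2 * ℓ` is nonincreasing.
  have hexcess n (hn : m ≤ n) : |y n| ≤ c / 2 * ℓ n + K := by
    induction n, hn using Nat.le_induction with
    | base => exact le_add_of_nonneg_left (by have := hℓ.pos m; positivity)
    | succ n hn ih =>
      obtain ⟨⟨h₀, h₁⟩, hrn⟩ := hm n hn
      rw [Real.norm_eq_abs, Real.norm_of_nonneg (hℓ.nonneg n)] at hrn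
      have hK : 0 ≤ K := abs_nonneg _
      calc |y (n + 1)| ≤ |(1 - a n) * y n| + |a n * r n| := by rw [hy]; exact abs_add_le _ _
        _ = (1 - a n) * |y n| + a n * |r n| := by
            rw [abs_mul, abs_mul, abs_of_nonneg h₀, abs_of_nonneg (sub_nonneg.2 h₁)]
        _ ≤ (1 - a n) * (c / 2 * ℓ n + K) + a n * (c / 2 * ℓ n) := by
            have := sub_nonneg.2 h₁
            gcongr
        _ ≤ c / 2 * ℓ (n + 1) + K := by
            nlinarith [hℓ.monotone n.le_succ, mul_nonneg h₀ hK]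
  filter_upwards [eventually_ge_atTop m, (hℓ.const_isLittleO K).def (half_pos hc)] with n hn hKn
  rw [Real.norm_of_nonneg (hℓ.nonneg n)] at hKn ⊢
  rw [Real.norm_eq_abs]
  linarith [hexcess n hn, (Real.le_norm_self K).trans hKn]

end IsScale

lemma one_add_mul_sub_one_le_rpow {s y : ℝ} (hs : s ≤ 0) (hy : 0 < y) :
    1 + s * (y - 1) ≤ y ^ s := by
  rw [Real.rpow_def_of_pos hy]
  nlinarith [Real.add_one_le_exp (Real.log y * s), Real.log_le_sub_one_of_pos hy]

lemma sub_div_rpow_le {u v q : ℝ} (hu : 0 < u) (hv : 0 < v) (hq : 1 ≤ q) :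
    (q - 1) * ((v - u) / v ^ q) ≤ u ^ (1 - q) - v ^ (1 - q) := by
  have hbernoulli := one_add_mul_sub_one_le_rpow (sub_nonpos.2 hq) (div_pos hu hv)
  have hsplit : v ^ (1 - q) = v / v ^ q := by rw [Real.rpow_sub hv, Real.rpow_one]
  rw [Real.div_rpow hu.le hv.le, le_div_iff₀ (by positivity), hsplit] at hbernoulli
  rw [hsplit]
  have : (1 + (1 - q) * (u / v - 1)) * (v / v ^ q)
      = v / v ^ q + (q - 1) * ((v - u) / v ^ q) := by
    field_simp
    ring
  linarith

lemma summable_div_one_add_sum_rpow {x : ℕ → ℝ} {q : ℝ} (hx : ∀ k, 0 ≤ x k) (hq : 1 < q) :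
    Summable fun k => x k / (1 + ∑ i ∈ range (k + 1), x i) ^ q := by
  let Λ n := 1 + ∑ i ∈ range n, x i
  have hΛ n : 0 < Λ n := by have := sum_nonneg fun i (_ : i ∈ range n) => hx i; positivity
  have hstep k : (q - 1) * (x k / Λ (k + 1) ^ q) ≤ Λ k ^ (1 - q) - Λ (k + 1) ^ (1 - q) := by
    have hxk : x k = Λ (k + 1) - Λ k := by simp only [Λ, sum_range_succ]; ring
    rw [hxk]
    exact sub_div_rpow_le (hΛ k) (hΛ (k + 1)) hq.le
  refine summable_of_sum_range_le (c := Λ 0 ^ (1 - q) / (q - 1))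
    (fun k => div_nonneg (hx k) (Real.rpow_nonneg (hΛ _).le _)) fun n => ?_
  rw [le_div_iff₀ (sub_pos.2 hq), mul_comm, mul_sum]
  refine (sum_le_sum fun k _ => hstep k).trans ?_
  rw [sum_range_sub' (fun k => Λ k ^ (1 - q))]
  linarith [Real.rpow_nonneg (hΛ n).le (1 - q)]

lemma IsScale.summable_div_rpow {ℓ x : ℕ → ℝ} (hℓ : IsScale ℓ) {q : ℝ} (hx : ∀ k, 0 ≤ x k)
    (hq : 1 < q) (hsum : (fun n => ∑ k ∈ range n, x k) =O[atTop] ℓ) :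
    Summable fun k => x k / ℓ (k + 1) ^ q := by
  obtain ⟨C, hC₀, hC⟩ := hℓ.exists_forall_abs_le ((hℓ.const_isLittleO 1).isBigO.add hsum)
  refine ((summable_div_one_add_sum_rpow hx hq).mul_left (C ^ q)).of_nonneg_of_le
    (fun k => div_nonneg (hx k) (Real.rpow_nonneg (hℓ.nonneg _) _)) fun k => ?_
  have hΛ : 0 < 1 + ∑ i ∈ range (k + 1), x i := by
    have := sum_nonneg fun i (_ : i ∈ range (k + 1)) => hx i
    positivity
  have hle : (1 + ∑ i ∈ range (k + 1), x i) ^ q ≤ C ^ q * ℓ (k + 1) ^ q := by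
    rw [← Real.mul_rpow hC₀.le (hℓ.nonneg _)]
    exact Real.rpow_le_rpow hΛ.le ((le_abs_self _).trans (hC (k + 1))) (by linarith)
  have hℓq := Real.rpow_pos_of_pos (hℓ.pos (k + 1)) q
  rw [← mul_div_assoc, div_le_div_iff₀ hℓq (Real.rpow_pos_of_pos hΛ q)]
  nlinarith [hx k]

lemma summable_mul_rpow_of_bddAbove {f x : ℕ → ℝ} {s : ℝ} (hf : ∀ k, 0 ≤ f k) (hx : ∀ k, 0 < x k)
    (hs : 1 ≤ s) (hbdd : BddAbove (Set.range x)) (hsum : Summable fun k => f k * x k) :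
    Summable fun k => f k * x k ^ s := by
  obtain ⟨B, hB⟩ := hbdd
  refine (hsum.mul_right (B ^ (s - 1))).of_nonneg_of_le
    (fun k => mul_nonneg (hf k) (Real.rpow_nonneg (hx k).le _)) fun k => ?_
  have hsplit : x k ^ s = x k * x k ^ (s - 1) := by
    rw [Real.rpow_sub_one (hx k).ne', mul_div_cancel₀ _ (hx k).ne']
  rw [hsplit, ← mul_assoc]
  have := mul_nonneg (hf k) (hx k).le
  gcongr
  exacts [(hx k).le, hB ⟨k, rfl⟩]

end Scale

section HarmonicScale

/-- The normalization of the theorem: `1 + ∑_{k < n} 1 / (k + 1)`, equivalent to `log n`. It is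
preferred to the logarithm because its increments are exact. -/
def harmonicScale (n : ℕ) : ℝ := 1 + ∑ k ∈ range n, ((k : ℝ) + 1)⁻¹

lemma harmonicScale_succ (n : ℕ) : harmonicScale (n + 1) = harmonicScale n + ((n : ℝ) + 1)⁻¹ := by
  simp only [harmonicScale, sum_range_succ, add_assoc]

lemma isScale_harmonicScale : IsScale harmonicScale where
  one_le n := le_add_of_nonneg_right (sum_nonneg fun k _ => by positivity)
  monotone := monotone_nat_of_le_succ fun n => by
    rw [harmonicScale_succ]
    exact le_add_of_nonneg_right (by positivity)
  tendsto_atTop := tendsto_atTop_add_const_left _ _ <| by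
    simpa using Real.tendsto_sum_range_one_div_nat_succ_atTop

lemma tendsto_log_natCast_atTop : Tendsto (fun n : ℕ => Real.log n) atTop atTop :=
  Real.tendsto_log_atTop.comp tendsto_natCast_atTop_atTop

lemma harmonicScale_sub_log_isLittleO :
    (fun n => harmonicScale n - Real.log n) =o[atTop] fun n : ℕ => Real.log n := by
  have hlim : Tendsto (fun n : ℕ => harmonicScale n - Real.log n) atTop
      (𝓝 (1 + Real.eulerMascheroniConstant)) := by
    refine (Real.tendsto_harmonic_sub_log.const_add 1).congr fun n => ?_
    simp [harmonicScale, harmonic, add_sub_assoc]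
  exact (hlim.isBigO_one ℝ).trans_isLittleO ((isLittleO_one_left_iff ℝ).2
    (tendsto_norm_atTop_atTop.comp tendsto_log_natCast_atTop))

lemma harmonicScale_isEquivalent_log : harmonicScale ~[atTop] fun n : ℕ => Real.log n :=
  harmonicScale_sub_log_isLittleO

lemma sum_div_succ_isBigO_harmonicScale :
    (fun n => ∑ k ∈ range n, ((k : ℝ) + 1)⁻¹) =O[atTop] harmonicScale :=
  ((isBigO_refl _ _).sub (isScale_harmonicScale.const_isLittleO 1).isBigO).congr_left fun n => by
    simp [harmonicScale]

/-- Solving the differential equation `t X' + M X = M κ log t` along the integers. -/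
lemma sub_mul_harmonicScale_isLittleO_of_relaxation {X : ℕ → ℝ} {M κ : ℝ} (hM : 0 < M)
    (hX : (fun n : ℕ => (n + 1) * (X (n + 1) - X n) + M * X n - M * κ * harmonicScale n)
      =o[atTop] harmonicScale) :
    (fun n => X n - κ * harmonicScale n) =o[atTop] harmonicScale := by
  let a (n : ℕ) : ℝ := M / (n + 1)
  let r (n : ℕ) : ℝ :=
    M⁻¹ * (((n + 1) * (X (n + 1) - X n) + M * X n - M * κ * harmonicScale n) - κ)
  have hr : r =o[atTop] harmonicScale :=
    (hX.sub (isScale_harmonicScale.const_isLittleO κ)).const_mul_left _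
  refine isScale_harmonicScale.isLittleO_of_relaxation (a := a)
    (Eventually.of_forall fun n => by positivity) ?_ hr fun n => ?_
  · filter_upwards [tendsto_natCast_atTop_atTop.eventually_ge_atTop M] with n hn
    exact (div_le_one (by positivity)).2 (by linarith)
  · simp only [a, r, harmonicScale_succ]
    have : ((n : ℝ) + 1) ≠ 0 := by positivity
    field_simp
    ring

/-- Abel summation: the logarithm comes from `∑ T_{k+1} / ((k + 1) (k + 2))`. -/
lemma sum_sub_div_sub_mul_harmonicScale_isLittleO {T : ℕ → ℝ} {κ : ℝ}
    (hT : Tendsto (fun n : ℕ => T n / (n + 1)) atTop (𝓝 κ)) :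
    (fun n => ∑ k ∈ range n, (T (k + 1) - T k) / (k + 1) - κ * harmonicScale n)
      =o[atTop] harmonicScale := by
  let τ (n : ℕ) : ℝ := T n / (n + 1)
  have habel n : ∑ k ∈ range n, (T (k + 1) - T k) / (k + 1) - κ * harmonicScale n
      = τ n + (-τ 0 - κ) + ∑ k ∈ range n, (τ (k + 1) - κ) * ((k : ℝ) + 1)⁻¹ := by
    induction n with
    | zero => simp [harmonicScale, ← add_sub_assoc]
    | succ n ih =>
      have hstep : (T (n + 1) - T n) / ((n : ℝ) + 1)
          = τ (n + 1) - τ n + τ (n + 1) * ((n : ℝ) + 1)⁻¹ := by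
        simp only [τ]
        push_cast
        field_simp
        ring
      rw [sum_range_succ, harmonicScale_succ, sum_range_succ]
      linear_combination ih + hstep
  have hτ : τ =o[atTop] harmonicScale :=
    (hT.isBigO_one ℝ).trans_isLittleO (isScale_harmonicScale.const_isLittleO 1)
  have hsum : (fun n => ∑ k ∈ range n, (τ (k + 1) - κ) * ((k : ℝ) + 1)⁻¹)
      =o[atTop] harmonicScale := by
    refine isScale_harmonicScale.sum_isLittleO (fun k => by positivity)
      sum_div_succ_isBigO_harmonicScale ?_
    have hlim : Tendsto (fun k => τ (k + 1) - κ) atTop (𝓝 0) :=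
      tendsto_sub_nhds_zero_iff.2 (hT.comp (tendsto_add_atTop_nat 1))
    simpa using ((isLittleO_one_iff ℝ).2 hlim).mul_isBigO
      (isBigO_refl (fun k : ℕ => ((k : ℝ) + 1)⁻¹) atTop)
  exact ((hτ.add (isScale_harmonicScale.const_isLittleO _)).add hsum).congr_left
    fun n => (habel n).symm

end HarmonicScale

section QuadraticPowers

lemma abs_coeff_mul_le {P P' Q Q' : Polynomial ℝ} (hP : ∀ i, |P.coeff i| ≤ Q.coeff i)
    (hP' : ∀ i, |P'.coeff i| ≤ Q'.coeff i) (i : ℕ) : |(P * P').coeff i| ≤ (Q * Q').coeff i := by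
  simp only [Polynomial.coeff_mul]
  refine (abs_sum_le_sum_abs _ _).trans (sum_le_sum fun x _ => ?_)
  rw [abs_mul]
  exact mul_le_mul (hP _) (hP' _) (abs_nonneg _) ((abs_nonneg _).trans (hP _))

lemma abs_coeff_pow_le {P Q : Polynomial ℝ} (hP : ∀ i, |P.coeff i| ≤ Q.coeff i) (m i : ℕ) :
    |(P ^ m).coeff i| ≤ (Q ^ m).coeff i := by
  induction m generalizing i with
  | zero =>
    simp only [pow_zero, Polynomial.coeff_one]
    split_ifs <;> simp
  | succ m ih =>
    simp only [pow_succ]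
    exact abs_coeff_mul_le ih hP i

lemma coeff_C_mul_X_add_C_pow (a b : ℝ) (n j : ℕ) :
    ((Polynomial.C b * Polynomial.X + Polynomial.C a) ^ n).coeff j
      = n.choose j * (a ^ (n - j) * b ^ j) := by
  have hcomp : (Polynomial.C b * Polynomial.X + Polynomial.C a) ^ n
      = ((Polynomial.X + Polynomial.C a) ^ n).comp (Polynomial.C b * Polynomial.X) := by simp
  rw [hcomp, Polynomial.comp_C_mul_X_coeff, Polynomial.coeff_X_add_C_pow]
  ring

/-- The coefficient of `e ^ j` in `(h + 2 * g * e + f * e ^ 2) ^ m`. -/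
def quadPowCoeff (h g f : ℝ) (m j : ℕ) : ℝ :=
  ((Polynomial.C h + Polynomial.C (2 * g) * Polynomial.X
    + Polynomial.C f * Polynomial.X ^ 2) ^ m).coeff j

lemma sum_quadPowCoeff_mul_pow (h g f e : ℝ) (m : ℕ) :
    ∑ j ∈ range (2 * m + 1), quadPowCoeff h g f m j * e ^ j = (h + 2 * g * e + f * e ^ 2) ^ m := by
  have hdeg : ((Polynomial.C h + Polynomial.C (2 * g) * Polynomial.X
      + Polynomial.C f * Polynomial.X ^ 2) ^ m).natDegree < 2 * m + 1 := by
    refine Nat.lt_succ_of_le (Polynomial.natDegree_pow_le.trans ?_)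
    rw [mul_comm]
    gcongr
    compute_degree
  simp only [quadPowCoeff]
  rw [← Polynomial.eval_eq_sum_range' hdeg]
  simp

lemma quadPowCoeff_zero_right (h g f : ℝ) (m : ℕ) : quadPowCoeff h g f m 0 = h ^ m := by
  simp [quadPowCoeff, Polynomial.coeff_zero_eq_eval_zero]

lemma quadPowCoeff_succ_succ (h g f : ℝ) (m j : ℕ) :
    quadPowCoeff h g f (m + 1) (j + 2) = h * quadPowCoeff h g f m (j + 2)
      + 2 * g * quadPowCoeff h g f m (j + 1) + f * quadPowCoeff h g f m j := by
  simp only [quadPowCoeff, pow_succ _ m]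
  generalize (Polynomial.C h + _ + _) ^ m = P
  rw [mul_comm, add_mul, add_mul, Polynomial.coeff_add, Polynomial.coeff_add, mul_assoc, mul_assoc,
    Polynomial.coeff_C_mul, Polynomial.coeff_C_mul, Polynomial.coeff_C_mul,
    Polynomial.coeff_X_pow_mul, show j + 2 = j + 1 + 1 from rfl, Polynomial.coeff_X_mul]

lemma quadPowCoeff_one_right (h g f : ℝ) (m : ℕ) :
    quadPowCoeff h g f m 1 = m * (2 * g * h ^ (m - 1)) := by
  have h := Polynomial.coeff_derivative ((Polynomial.C h + Polynomial.C (2 * g) * Polynomial.X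
    + Polynomial.C f * Polynomial.X ^ 2) ^ m) 0
  rw [zero_add, Nat.cast_zero, zero_add, mul_one] at h
  rw [quadPowCoeff, ← h, Polynomial.coeff_zero_eq_eval_zero, Polynomial.derivative_pow]
  simp
  ring

lemma quadPowCoeff_succ_two (h g f : ℝ) (m : ℕ) :
    quadPowCoeff h g f (m + 1) 2
      = (m + 1) * (f * h ^ m + 2 * m * (g ^ 2 * h ^ (m - 1))) := by
  induction m with
  | zero => simp [quadPowCoeff]
  | succ m ih =>
    rw [quadPowCoeff_succ_succ, ih, quadPowCoeff_one_right, quadPowCoeff_zero_right]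
    cases m <;> (simp; ring)

lemma abs_quadPowCoeff_le {h g f : ℝ} (hh : 0 ≤ h) (hf : 0 ≤ f) (hg : g ^ 2 ≤ f * h) (m j : ℕ) :
    |quadPowCoeff h g f m j| ≤ (2 * m).choose j * (√h ^ (2 * m - j) * √f ^ j) := by
  have hg' : |g| ≤ √f * √h := by
    rw [← Real.sqrt_mul hf]
    exact Real.abs_le_sqrt hg
  rw [← coeff_C_mul_X_add_C_pow, pow_mul]
  refine abs_coeff_pow_le (fun i => ?_) m j
  have hsq : (Polynomial.C √f * Polynomial.X + Polynomial.C √h) ^ 2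
      = Polynomial.C h + Polynomial.C (2 * (√f * √h)) * Polynomial.X
        + Polynomial.C f * Polynomial.X ^ 2 := by
    have hC : Polynomial.C h = Polynomial.C √h ^ 2 := by rw [← map_pow, Real.sq_sqrt hh]
    have hC' : Polynomial.C f = Polynomial.C √f ^ 2 := by rw [← map_pow, Real.sq_sqrt hf]
    simp only [hC, hC', map_mul, map_ofNat]
    ring
  rw [hsq]
  simp only [Polynomial.coeff_add, Polynomial.coeff_C_mul, Polynomial.coeff_C, Polynomial.coeff_X,
    Polynomial.coeff_X_pow]
  match i with
  | 0 => simp [abs_of_nonneg hh]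
  | 1 => simpa [abs_mul] using hg'
  | 2 => simp [abs_of_nonneg hf]
  | i + 3 => simp

lemma pow_le_one_add_pow {x : ℝ} {i n : ℕ} (hx : 0 ≤ x) (hin : i ≤ n) : x ^ i ≤ 1 + x ^ n := by
  obtain h | h := le_total x 1
  · linarith [pow_le_one₀ (n := i) hx h, pow_nonneg hx n]
  · linarith [pow_le_pow_right₀ h hin]

lemma abs_quadPowCoeff_succ_le {h g f : ℝ} (hh : 0 ≤ h) (hf : 0 ≤ f) (hg : g ^ 2 ≤ f * h)
    (m j : ℕ) :
    |quadPowCoeff h g f (m + 1) (j + 2)|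
      ≤ (2 * (m + 1)).choose (j + 2) * √f ^ j * (f * (1 + h ^ m)) := by
  calc |quadPowCoeff h g f (m + 1) (j + 2)|
      ≤ (2 * (m + 1)).choose (j + 2) * (√h ^ (2 * (m + 1) - (j + 2)) * √f ^ (j + 2)) :=
        abs_quadPowCoeff_le hh hf hg _ _
    _ ≤ (2 * (m + 1)).choose (j + 2) * ((1 + √h ^ (2 * m)) * √f ^ (j + 2)) := by
        gcongr
        exact pow_le_one_add_pow (Real.sqrt_nonneg h) (by lia)
    _ = (2 * (m + 1)).choose (j + 2) * √f ^ j * (f * (1 + h ^ m)) := by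
        rw [pow_mul, Real.sq_sqrt hh, pow_add √f, Real.sq_sqrt hf]
        ring

variable {Ω : Type*} {m0 : MeasurableSpace Ω}

lemma stronglyMeasurable_coeff_mul {P Q : Ω → Polynomial ℝ}
    (hP : ∀ i, StronglyMeasurable fun ω => (P ω).coeff i)
    (hQ : ∀ i, StronglyMeasurable fun ω => (Q ω).coeff i) (i : ℕ) :
    StronglyMeasurable fun ω => (P ω * Q ω).coeff i := by
  simp only [Polynomial.coeff_mul]
  exact Finset.stronglyMeasurable_fun_sum _ fun x _ => (hP _).mul (hQ _)

lemma stronglyMeasurable_quadPowCoeff {h g f : Ω → ℝ} (hh : StronglyMeasurable h)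
    (hg : StronglyMeasurable g) (hf : StronglyMeasurable f) (m j : ℕ) :
    StronglyMeasurable fun ω => quadPowCoeff (h ω) (g ω) (f ω) m j := by
  simp only [quadPowCoeff]
  induction m generalizing j with
  | zero => simpa using stronglyMeasurable_const
  | succ m ih =>
    simp only [pow_succ _ m]
    refine stronglyMeasurable_coeff_mul ih (fun i => ?_) j
    simp only [Polynomial.coeff_add, Polynomial.coeff_C_mul, Polynomial.coeff_C]
    split_ifs
    · exact (hh.add ((hg.const_mul 2).mul_const _)).add (hf.mul_const _)
    · exact (stronglyMeasurable_const.add ((hg.const_mul 2).mul_const _)).add (hf.mul_const _)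

end QuadraticPowers

section Noise

variable {Ω : Type*} {m0 : MeasurableSpace Ω} {μ : Measure Ω} {F : Filtration ℕ m0}
  {e : ℕ → Ω → ℝ} {σ a : ℝ} {p : ℕ}

/-- Homoscedastic martingale difference noise whose conditional moments of order `a` are bounded
along each path. As in `IsMartingaleDiff`, `e k` is revealed at time `k + 1`. -/
structure IsNoise (F : Filtration ℕ m0) (μ : Measure Ω) (σ a : ℝ) (e : ℕ → Ω → ℝ) : Prop where
  stronglyMeasurable : ∀ k, StronglyMeasurable[F (k + 1)] (e k)
  condExp_eq_zero : ∀ k, μ[e k|F k] =ᵐ[μ] 0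
  condExp_sq : ∀ k, μ[fun ω => e k ω ^ 2|F k] =ᵐ[μ] fun _ => σ ^ 2
  integrable_abs_rpow : ∀ k, Integrable (fun ω => |e k ω| ^ a) μ
  exists_condExp_le : ∀ᵐ ω ∂μ, ∃ C : ℝ, ∀ k, (μ[fun ω => |e k ω| ^ a|F k]) ω ≤ C

/-- The conditional moment `E[e_k ^ j | F_k]`. -/
def condMoment (F : Filtration ℕ m0) (μ : Measure Ω) (e : ℕ → Ω → ℝ) (j k : ℕ) : Ω → ℝ :=
  μ[fun ω => e k ω ^ j|F k]

lemma rpow_le_one_add_rpow {x s t : ℝ} (hx : 0 ≤ x) (hs : 0 ≤ s) (hst : s ≤ t) :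
    x ^ s ≤ 1 + x ^ t := by
  obtain h | h := le_total x 1
  · linarith [Real.rpow_le_one hx h hs, Real.rpow_nonneg hx t]
  · linarith [Real.rpow_le_rpow_of_exponent_le h hst]

/-- The exponent `r` at which Chow's theorem is applied to the powers `e ^ j`. -/
lemma exists_chow_exponent {j : ℕ} (hp : 1 ≤ p) (ha : 2 * p < a) (hj : 1 ≤ j) (hjp : j ≤ 2 * p) :
    ∃ r : ℝ, 1 < r ∧ r ≤ 2 ∧ 2 ≤ j * r ∧ j * r ≤ a := by
  have hp' : (1 : ℝ) ≤ p := mod_cast hp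
  obtain rfl | hj₂ := hj.eq_or_lt
  · exact ⟨2, by norm_num, le_rfl, by norm_num, by norm_num; linarith⟩
  have hj' : (2 : ℝ) ≤ j := mod_cast hj₂
  have hjp' : (j : ℝ) ≤ 2 * p := mod_cast hjp
  have hr : 1 < min 2 (a / (2 * p)) := lt_min one_lt_two ((one_lt_div (by positivity)).2 ha)
  refine ⟨min 2 (a / (2 * p)), hr, min_le_left _ _, by nlinarith, ?_⟩
  calc (j : ℝ) * min 2 (a / (2 * p)) ≤ 2 * p * (a / (2 * p)) := by
        gcongr
        exact min_le_right _ _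
    _ = a := mul_div_cancel₀ a (by positivity)

namespace IsNoise

lemma stronglyMeasurable_pow (he : IsNoise F μ σ a e) (j k : ℕ) :
    StronglyMeasurable[F (k + 1)] (fun ω => e k ω ^ j) :=
  (he.stronglyMeasurable k).pow j

lemma condMoment_one (he : IsNoise F μ σ a e) : ∀ᵐ ω ∂μ, ∀ k, condMoment F μ e 1 k ω = 0 :=
  ae_all_iff.2 fun k => by
    simp only [condMoment, pow_one]
    exact he.condExp_eq_zero k

lemma condMoment_two (he : IsNoise F μ σ a e) : ∀ᵐ ω ∂μ, ∀ k, condMoment F μ e 2 k ω = σ ^ 2 :=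
  ae_all_iff.2 he.condExp_sq

variable [IsFiniteMeasure μ]

lemma integrable_of_abs_le (he : IsNoise F μ σ a e) {k : ℕ} {g : Ω → ℝ}
    (hg : StronglyMeasurable[F (k + 1)] g) (hle : ∀ ω, |g ω| ≤ 1 + |e k ω| ^ a) :
    Integrable g μ :=
  ((integrable_const 1).add (he.integrable_abs_rpow k)).mono'
    (hg.mono (F.le _)).aestronglyMeasurable (Eventually.of_forall hle)

lemma abs_pow_le (e : ℕ → Ω → ℝ) {j : ℕ} (hja : j ≤ a) (k : ℕ) (ω : Ω) :
    |e k ω ^ j| ≤ 1 + |e k ω| ^ a := by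
  rw [abs_pow, ← Real.rpow_natCast]
  exact rpow_le_one_add_rpow (abs_nonneg _) j.cast_nonneg hja

lemma integrable_pow (he : IsNoise F μ σ a e) {j : ℕ} (hja : j ≤ a) (k : ℕ) :
    Integrable (fun ω => e k ω ^ j) μ :=
  he.integrable_of_abs_le (he.stronglyMeasurable_pow j k) (abs_pow_le e hja k)

lemma exists_abs_condExp_le (he : IsNoise F μ σ a e) {g : ℕ → Ω → ℝ}
    (hg : ∀ k, StronglyMeasurable[F (k + 1)] (g k)) (hle : ∀ k ω, |g k ω| ≤ 1 + |e k ω| ^ a) :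
    ∀ᵐ ω ∂μ, ∃ C : ℝ, ∀ k, |(μ[g k|F k]) ω| ≤ C := by
  have hbound : ∀ᵐ ω ∂μ, ∀ k, |(μ[g k|F k]) ω| ≤ 1 + (μ[fun ω => |e k ω| ^ a|F k]) ω :=
    ae_all_iff.2 fun k => by
      have hi := he.integrable_of_abs_le (hg k) (hle k)
      have hi' := (integrable_const (1 : ℝ)).add (he.integrable_abs_rpow k)
      filter_upwards [condExp_mono (m := F k) hi hi'
          (Eventually.of_forall fun ω => (le_abs_self _).trans (hle k ω)),
        condExp_mono (m := F k) hi.neg hi'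
          (Eventually.of_forall fun ω => (neg_le_abs _).trans (hle k ω)),
        condExp_neg (μ := μ) (g k) (F k),
        condExp_add (integrable_const (1 : ℝ)) (he.integrable_abs_rpow k) (F k)] with ω h₁ h₂ h₃ h₄
      rw [h₄, Pi.add_apply, condExp_const (F.le k)] at h₁ h₂
      rw [h₃, Pi.neg_apply] at h₂
      exact abs_le'.2 ⟨h₁, h₂⟩
  filter_upwards [hbound, he.exists_condExp_le] with ω h ⟨C, hC⟩
  exact ⟨1 + C, fun k => (h k).trans (by gcongr; exact hC k)⟩

lemma exists_abs_condMoment_le (he : IsNoise F μ σ a e) {j : ℕ} (hja : j ≤ a) :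
    ∀ᵐ ω ∂μ, ∃ C : ℝ, ∀ k, |condMoment F μ e j k ω| ≤ C :=
  he.exists_abs_condExp_le (he.stronglyMeasurable_pow j) (abs_pow_le e hja)

lemma isMartingaleDiff_pow_sub (he : IsNoise F μ σ a e) {j : ℕ} (hja : j ≤ a) :
    IsMartingaleDiff F μ fun k => (fun ω => e k ω ^ j) - condMoment F μ e j k :=
  .sub_condExp (he.stronglyMeasurable_pow j) (he.integrable_pow hja)

lemma ae_exists_tendsto_sum_mul_pow_sub (he : IsNoise F μ σ a e) {j : ℕ} {r : ℝ}
    (hr₁ : 1 ≤ r) (hr₂ : r ≤ 2) (hjr : j * r ≤ a) {H : ℕ → Ω → ℝ}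
    (hH : ∀ k, StronglyMeasurable[F k] (H k)) (hHs : ∀ᵐ ω ∂μ, Summable fun k => |H k ω| ^ r) :
    ∀ᵐ ω ∂μ, ∃ l, Tendsto
      (fun n => ∑ k ∈ range n, H k ω * (e k ω ^ j - condMoment F μ e j k ω)) atTop (𝓝 l) := by
  have hja : (j : ℝ) ≤ a := (le_mul_of_one_le_right j.cast_nonneg hr₁).trans hjr
  have hm k := stronglyMeasurable_abs_rpow (he.stronglyMeasurable_pow j k) r
  have hle k ω : |(|e k ω ^ j| ^ r)| ≤ 1 + |e k ω| ^ a := by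
    rw [abs_of_nonneg (Real.rpow_nonneg (abs_nonneg _) _), abs_pow, ← Real.rpow_natCast,
      ← Real.rpow_mul (abs_nonneg _)]
    exact rpow_le_one_add_rpow (abs_nonneg _) (by positivity) hjr
  refine ae_exists_tendsto_sum_mul_sub_condExp hr₁ hr₂ (he.stronglyMeasurable_pow j)
    (he.integrable_pow hja) (fun k => he.integrable_of_abs_le (hm k) (hle k)) ?_ hH hHs
  filter_upwards [he.exists_abs_condExp_le hm hle] with ω ⟨C, hC⟩
  exact ⟨C, fun k => (le_abs_self _).trans (hC k)⟩

end IsNoise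

end Noise

section Tempered

variable {ℓ f x : ℕ → ℝ} {q : ℝ}

/-- A priori growth condition on a nonnegative sequence `x` driven by the intensities `f`, just
above the critical normalization `ℓ`. -/
structure IsTempered (ℓ : ℕ → ℝ) (q : ℝ) (f x : ℕ → ℝ) : Prop where
  summable : Summable fun k => f k * ((1 + x k) / ℓ (k + 1) ^ q)
  bddAbove : BddAbove (Set.range fun k => (1 + x k) / ℓ (k + 1) ^ q)

lemma bddAbove_range_one_add_div_rpow (hℓ : IsScale ℓ) (hx : ∀ k, 0 ≤ x k) (hq : 0 ≤ q)
    (hb : BddAbove (Set.range fun k => x k / ℓ k ^ q)) :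
    BddAbove (Set.range fun k => (1 + x k) / ℓ (k + 1) ^ q) := by
  obtain ⟨B, hB⟩ := hb
  refine ⟨1 + B, Set.forall_mem_range.2 fun k => ?_⟩
  rw [add_div]
  refine add_le_add (div_le_one_of_le₀ (Real.one_le_rpow (hℓ.one_le _) hq)
    (Real.rpow_nonneg (hℓ.nonneg _) q)) (le_trans ?_ (hB ⟨k, rfl⟩))
  exact div_le_div_of_nonneg_left (hx k) (Real.rpow_pos_of_pos (hℓ.pos k) q)
    (Real.rpow_le_rpow (hℓ.nonneg k) (hℓ.monotone k.le_succ) hq)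

lemma IsTempered.of_isBigO (hℓ : IsScale ℓ) (hf : ∀ k, 0 ≤ f k) (hx : ∀ k, 0 ≤ x k)
    (hfs : (fun n => ∑ k ∈ range n, f k) =O[atTop] ℓ)
    (hfx : (fun n => ∑ k ∈ range n, f k * x k) =O[atTop] ℓ) (hxO : x =O[atTop] ℓ) (hq : 1 < q) :
    IsTempered ℓ q f x where
  summable := by
    simp only [← mul_div_assoc]
    refine hℓ.summable_div_rpow (fun k => mul_nonneg (hf k) (by linarith [hx k])) hq ?_
    simp only [mul_add, mul_one, sum_add_distrib]
    exact hfs.add hfx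
  bddAbove := by
    obtain ⟨C, hC₀, hC⟩ := hℓ.exists_forall_abs_le hxO
    refine bddAbove_range_one_add_div_rpow hℓ hx (by linarith)
      ⟨C, Set.forall_mem_range.2 fun k => ?_⟩
    rw [div_le_iff₀ (Real.rpow_pos_of_pos (hℓ.pos k) q)]
    refine ((le_abs_self _).trans (hC k)).trans (mul_le_mul_of_nonneg_left ?_ hC₀.le)
    exact Real.self_le_rpow_of_one_le (hℓ.one_le k) hq.le

lemma abs_quadPowCoeff_rpow_le {v h g f B r τ : ℝ} {M j : ℕ} (hM : 1 ≤ M) (hj : j ≤ 2 * M)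
    (hh : 0 ≤ h) (hhv : h ≤ v) (hf : 0 ≤ f) (hfB : f ≤ B) (hg : g ^ 2 ≤ f * h) (hr : 0 ≤ r)
    (hjr : 2 ≤ j * r) (hτ : (2 * M - j) * r ≤ 2 * M * τ) :
    |quadPowCoeff h g f M j| ^ r
      ≤ ((2 * M).choose j : ℝ) ^ r * B ^ (j * r / 2 - 1) * (f * (1 + v ^ M) ^ τ) := by
  have hY : 1 ≤ 1 + v ^ M := le_add_of_nonneg_right (pow_nonneg (hh.trans hhv) M)
  have hhY : (√h ^ (2 * M - j)) ^ r ≤ (1 + v ^ M) ^ τ := by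
    have hM₀ : (0 : ℝ) < 2 * M := by
      have : (1 : ℝ) ≤ M := mod_cast hM
      positivity
    calc (√h ^ (2 * M - j)) ^ r = (h ^ M) ^ ((2 * M - j) * r / (2 * M)) := by
          rw [← Real.rpow_natCast, ← Real.rpow_natCast h, Real.sqrt_eq_rpow, ← Real.rpow_mul hh,
            ← Real.rpow_mul hh, ← Real.rpow_mul hh, Nat.cast_sub hj]
          congr 1
          push_cast
          field_simp
      _ ≤ (1 + v ^ M) ^ ((2 * M - j) * r / (2 * M)) := by
          have hj' : (j : ℝ) ≤ 2 * M := mod_cast hj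
          refine Real.rpow_le_rpow (pow_nonneg hh M) ?_
            (div_nonneg (mul_nonneg (sub_nonneg.2 hj') hr) hM₀.le)
          linarith [pow_le_pow_left₀ hh hhv M]
      _ ≤ (1 + v ^ M) ^ τ :=
          Real.rpow_le_rpow_of_exponent_le hY ((div_le_iff₀ hM₀).2 (by linarith))
  have hfB' : (√f ^ j) ^ r ≤ B ^ (j * r / 2 - 1) * f := by
    calc (√f ^ j) ^ r = f ^ ((j * r / 2 - 1) + 1) := by
          rw [← Real.rpow_natCast, Real.sqrt_eq_rpow, ← Real.rpow_mul hf, ← Real.rpow_mul hf]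
          congr 1
          ring
      _ = f ^ (j * r / 2 - 1) * f := by
          rw [Real.rpow_add_of_nonneg hf (by linarith) zero_le_one, Real.rpow_one]
      _ ≤ B ^ (j * r / 2 - 1) * f := by gcongr; linarith
  calc |quadPowCoeff h g f M j| ^ r
      ≤ ((2 * M).choose j * (√h ^ (2 * M - j) * √f ^ j)) ^ r :=
        Real.rpow_le_rpow (abs_nonneg _) (abs_quadPowCoeff_le hh hf hg M j) hr
    _ = ((2 * M).choose j : ℝ) ^ r * ((√h ^ (2 * M - j)) ^ r * (√f ^ j) ^ r) := by
        rw [Real.mul_rpow (by positivity) (by positivity),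
          Real.mul_rpow (by positivity) (by positivity)]
    _ ≤ ((2 * M).choose j : ℝ) ^ r * ((1 + v ^ M) ^ τ * (B ^ (j * r / 2 - 1) * f)) := by gcongr
    _ = ((2 * M).choose j : ℝ) ^ r * B ^ (j * r / 2 - 1) * (f * (1 + v ^ M) ^ τ) := by ring

lemma summable_abs_quadPowCoeff_div_rpow {V h g : ℕ → ℝ} {r τ : ℝ} {M j : ℕ} (hℓ : IsScale ℓ)
    (hM : 1 ≤ M) (hj : j ≤ 2 * M) (hh : ∀ k, 0 ≤ h k) (hhV : ∀ k, h k ≤ V k)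
    (hf : ∀ k, 0 ≤ f k) (hfb : BddAbove (Set.range f)) (hg : ∀ k, g k ^ 2 ≤ f k * h k)
    (hr : 0 ≤ r) (hjr : 2 ≤ j * r) (hτ₁ : 1 ≤ τ) (hqτ : q * τ = r)
    (hτ : (2 * M - j) * r ≤ 2 * M * τ) (hV : IsTempered ℓ q f fun k => V k ^ M) :
    Summable fun k => |quadPowCoeff (h k) (g k) (f k) M j / ℓ (k + 1)| ^ r := by
  obtain ⟨B, hB⟩ := hfb
  have hV₀ k : 0 ≤ V k := (hh k).trans (hhV k)
  have hY k : 0 < 1 + V k ^ M := by have := hV₀ k; positivity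
  have hsum := summable_mul_rpow_of_bddAbove hf
    (fun k => div_pos (hY k) (Real.rpow_pos_of_pos (hℓ.pos (k + 1)) q)) hτ₁ hV.bddAbove hV.summable
  refine (hsum.mul_left (((2 * M).choose j : ℝ) ^ r * B ^ (j * r / 2 - 1))).of_nonneg_of_le
    (fun k => by positivity) fun k => ?_
  have hℓk := hℓ.pos (k + 1)
  rw [abs_div, abs_of_pos hℓk, Real.div_rpow (abs_nonneg _) hℓk.le,
    Real.div_rpow (hY k).le (Real.rpow_nonneg hℓk.le q), ← Real.rpow_mul hℓk.le, hqτ,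
    ← mul_div_assoc, ← mul_div_assoc]
  gcongr
  exact abs_quadPowCoeff_rpow_le hM hj (hh k) (hhV k) (hf k) (hB ⟨k, rfl⟩) (hg k) hr hjr hτ

end Tempered

section QuadraticRecursion

variable {Ω : Type*} {m0 : MeasurableSpace Ω} {μ : Measure Ω} {F : Filtration ℕ m0}
  {e V h g f : ℕ → Ω → ℝ} {ℓ : ℕ → ℝ} {σ a q : ℝ} {p m : ℕ}

/-- Nonnegative processes `V` whose step is a quadratic polynomial in the noise `e`, with adapted
coefficients `h`, `g`, `f`; the discriminant condition makes this polynomial nonnegative, and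
`h ≤ V` says that without noise the process decreases. -/
structure IsQuadraticRecursion (F : Filtration ℕ m0) (e V h g f : ℕ → Ω → ℝ) : Prop where
  stronglyMeasurable : ∀ k, StronglyMeasurable[F k] (V k)
  stronglyMeasurable_const : ∀ k, StronglyMeasurable[F k] (h k)
  stronglyMeasurable_linear : ∀ k, StronglyMeasurable[F k] (g k)
  stronglyMeasurable_quadratic : ∀ k, StronglyMeasurable[F k] (f k)
  step : ∀ k ω, V (k + 1) ω = h k ω + 2 * g k ω * e k ω + f k ω * e k ω ^ 2
  const_nonneg : ∀ k ω, 0 ≤ h k ω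
  const_le : ∀ k ω, h k ω ≤ V k ω
  quadratic_nonneg : ∀ k ω, 0 ≤ f k ω
  sq_linear_le : ∀ k ω, g k ω ^ 2 ≤ f k ω * h k ω

lemma ae_isLittleO_sum {ι : Type*} {s : Finset ι} {x : ι → Ω → ℕ → ℝ}
    (hx : ∀ i ∈ s, ∀ᵐ ω ∂μ, x i ω =o[atTop] ℓ) :
    ∀ᵐ ω ∂μ, (fun n => ∑ i ∈ s, x i ω n) =o[atTop] ℓ :=
  ((ae_ball_iff s.countable_toSet).2 hx).mono fun _ h => .fun_sum h

lemma pow_mul_sub_le_pow_sub_pow {x y : ℝ} (hy : 0 ≤ y) (hyx : y ≤ x) (m : ℕ) :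
    x ^ m * (x - y) ≤ x ^ (m + 1) - y ^ (m + 1) := by
  have := mul_le_mul_of_nonneg_right (pow_le_pow_left₀ hy hyx m) hy
  rw [pow_succ, pow_succ]
  linarith

namespace IsQuadraticRecursion

lemma nonneg (hV : IsQuadraticRecursion F e V h g f) (k : ℕ) (ω : Ω) : 0 ≤ V k ω :=
  (hV.const_nonneg k ω).trans (hV.const_le k ω)

lemma stronglyMeasurable_coeff (hV : IsQuadraticRecursion F e V h g f) (M j k : ℕ) :
    StronglyMeasurable[F k] fun ω => quadPowCoeff (h k ω) (g k ω) (f k ω) M j :=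
  stronglyMeasurable_quadPowCoeff (m0 := F k) (hV.stronglyMeasurable_const k)
    (hV.stronglyMeasurable_linear k) (hV.stronglyMeasurable_quadratic k) M j

lemma mul_pow_succ_le (hV : IsQuadraticRecursion F e V h g f) {C : ℝ} {k : ℕ} {ω : Ω}
    (hC₀ : 0 ≤ C) (hC : f k ω * V k ω ≤ C * (V k ω - h k ω)) (m : ℕ) :
    f k ω * V k ω ^ (m + 1) ≤ C * (V k ω ^ (m + 1) - h k ω ^ (m + 1)) := by
  calc f k ω * V k ω ^ (m + 1) = V k ω ^ m * (f k ω * V k ω) := by ring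
    _ ≤ V k ω ^ m * (C * (V k ω - h k ω)) :=
        mul_le_mul_of_nonneg_left hC (pow_nonneg (hV.nonneg k ω) m)
    _ = C * (V k ω ^ m * (V k ω - h k ω)) := by ring
    _ ≤ C * (V k ω ^ (m + 1) - h k ω ^ (m + 1)) :=
        mul_le_mul_of_nonneg_left
          (pow_mul_sub_le_pow_sub_pow (hV.const_nonneg k ω) (hV.const_le k ω) m) hC₀

lemma pow_succ_eq (hV : IsQuadraticRecursion F e V h g f) (he : IsNoise F μ σ a e) (m : ℕ) :
    ∀ᵐ ω ∂μ, ∀ k, V (k + 1) ω ^ (m + 1) = h k ω ^ (m + 1)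
      + ∑ j ∈ range (2 * m + 2), quadPowCoeff (h k ω) (g k ω) (f k ω) (m + 1) (j + 1)
          * (e k ω ^ (j + 1) - condMoment F μ e (j + 1) k ω)
      + ∑ j ∈ range (2 * m + 1), quadPowCoeff (h k ω) (g k ω) (f k ω) (m + 1) (j + 2)
          * condMoment F μ e (j + 2) k ω := by
  filter_upwards [he.condMoment_one] with ω hω k
  have hdrift : ∑ j ∈ range (2 * m + 2), quadPowCoeff (h k ω) (g k ω) (f k ω) (m + 1) (j + 1)
        * condMoment F μ e (j + 1) k ω
      = ∑ j ∈ range (2 * m + 1), quadPowCoeff (h k ω) (g k ω) (f k ω) (m + 1) (j + 2)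
        * condMoment F μ e (j + 2) k ω := by
    rw [sum_range_succ', hω k, mul_zero, add_zero]
  rw [hV.step, ← sum_quadPowCoeff_mul_pow, show 2 * (m + 1) + 1 = (2 * m + 2) + 1 by ring,
    sum_range_succ', quadPowCoeff_zero_right, ← hdrift]
  simp only [mul_sub, sum_sub_distrib]
  ring

lemma abs_coeff_add_two_le (hV : IsQuadraticRecursion F e V h g f) (m j k : ℕ) (ω : Ω) :
    |quadPowCoeff (h k ω) (g k ω) (f k ω) (m + 1) (j + 2)|
      ≤ (2 * (m + 1)).choose (j + 2) * √(f k ω) ^ j * (f k ω * (1 + V k ω ^ m)) := by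
  have hf := hV.quadratic_nonneg k ω
  refine (abs_quadPowCoeff_succ_le (hV.const_nonneg k ω) hf (hV.sq_linear_le k ω) m j).trans ?_
  gcongr
  exacts [hV.const_nonneg k ω, hV.const_le k ω]

section Tempered

variable [IsFiniteMeasure μ]

lemma summable_drift_div (hℓ : IsScale ℓ) (hV : IsQuadraticRecursion F e V h g f)
    (he : IsNoise F μ σ a e) {j : ℕ} (hj : (j + 2 : ℕ) ≤ a)
    (hfb : ∀ᵐ ω ∂μ, BddAbove (Set.range fun k => f k ω))
    (ht : ∀ᵐ ω ∂μ, IsTempered ℓ q (fun k => f k ω) fun k => V k ω ^ m) :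
    ∀ᵐ ω ∂μ, Summable fun k => quadPowCoeff (h k ω) (g k ω) (f k ω) (m + 1) (j + 2)
      * condMoment F μ e (j + 2) k ω / ℓ (k + 1) ^ q := by
  filter_upwards [he.exists_abs_condMoment_le hj, hfb, ht] with ω ⟨C, hC⟩ ⟨B, hB⟩ hω
  refine (hω.summable.mul_left ((2 * (m + 1)).choose (j + 2) * √B ^ j * C)).of_norm_bounded
    fun k => ?_
  have hℓk := Real.rpow_pos_of_pos (hℓ.pos (k + 1)) q
  have : 0 ≤ C := (abs_nonneg _).trans (hC k)
  have hf := hV.quadratic_nonneg k ω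
  have hVk := hV.nonneg k ω
  rw [Real.norm_eq_abs, abs_div, abs_mul, abs_of_pos hℓk, ← mul_div_assoc, ← mul_div_assoc]
  refine div_le_div_of_nonneg_right ?_ hℓk.le
  calc |quadPowCoeff (h k ω) (g k ω) (f k ω) (m + 1) (j + 2)| * |condMoment F μ e (j + 2) k ω|
      ≤ (2 * (m + 1)).choose (j + 2) * √B ^ j * (f k ω * (1 + V k ω ^ m)) * C := by
        refine mul_le_mul ((hV.abs_coeff_add_two_le m j k ω).trans ?_) (hC k) (abs_nonneg _)
          (by positivity)
        gcongr
        exact hB ⟨k, rfl⟩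
    _ = (2 * (m + 1)).choose (j + 2) * √B ^ j * C * (f k ω * (1 + V k ω ^ m)) := by ring

lemma ae_exists_tendsto_pow_div_and_summable (hℓ : IsScale ℓ)
    (hV : IsQuadraticRecursion F e V h g f) (he : IsNoise F μ σ a e)
    (hma : (2 * m + 2 : ℕ) ≤ a) (hq : 0 ≤ q)
    (hfb : ∀ᵐ ω ∂μ, BddAbove (Set.range fun k => f k ω))
    (ht : ∀ᵐ ω ∂μ, IsTempered ℓ q (fun k => f k ω) fun k => V k ω ^ m) :
    ∀ᵐ ω ∂μ, (∃ l, Tendsto (fun k => V k ω ^ (m + 1) / ℓ k ^ q) atTop (𝓝 l)) ∧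
      Summable fun k => (V k ω ^ (m + 1) - h k ω ^ (m + 1)) / ℓ (k + 1) ^ q := by
  have hℓq k : 0 < ℓ k ^ q := Real.rpow_pos_of_pos (hℓ.pos k) q
  have hja {j : ℕ} (hj : j < 2 * m + 2) : ((j + 1 : ℕ) : ℝ) ≤ a :=
    (Nat.cast_le.2 (by lia)).trans hma
  let b k ω := ∑ j ∈ range (2 * m + 1), quadPowCoeff (h k ω) (g k ω) (f k ω) (m + 1) (j + 2)
    * condMoment F μ e (j + 2) k ω / ℓ (k + 1) ^ q
  let D k ω := ∑ j ∈ range (2 * m + 2), quadPowCoeff (h k ω) (g k ω) (f k ω) (m + 1) (j + 1)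
    / ℓ (k + 1) ^ q * (e k ω ^ (j + 1) - condMoment F μ e (j + 1) k ω)
  refine ae_exists_tendsto_and_summable_of_add_le (b := b) (D := D)
    (((hV.stronglyMeasurable 0).pow _).mul_const _) (fun k => ?_)
    (fun k ω => div_nonneg (pow_nonneg (hV.nonneg k ω) _) (hℓq k).le)
    (fun k ω => div_nonneg (sub_nonneg.2 ?_) (hℓq _).le) ?_ ?_ ?_
  · exact Finset.stronglyMeasurable_fun_sum _ fun j _ =>
      ((hV.stronglyMeasurable_coeff _ _ k).mul stronglyMeasurable_condExp).mul_const _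
  · exact pow_le_pow_left₀ (hV.const_nonneg k ω) (hV.const_le k ω) _
  · filter_upwards [(ae_ball_iff (range (2 * m + 1)).countable_toSet).2 fun j hj =>
      hV.summable_drift_div hℓ he (hja (Nat.succ_lt_succ (mem_range.1 hj))) hfb ht] with ω hω
    exact summable_sum hω
  · exact .sum _ fun j hj =>
      (he.isMartingaleDiff_pow_sub (hja (mem_range.1 hj))).isMartingaleTransform.adapted_mul
        fun k => (hV.stronglyMeasurable_coeff _ _ k).mul_const _
  · filter_upwards [hV.pow_succ_eq he m] with ω hω k
    have hdecr : V k ω ^ (m + 1) / ℓ (k + 1) ^ q ≤ V k ω ^ (m + 1) / ℓ k ^ q :=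
      div_le_div_of_nonneg_left (pow_nonneg (hV.nonneg k ω) _) (hℓq k)
        (Real.rpow_le_rpow (hℓ.nonneg k) (hℓ.monotone k.le_succ) hq)
    simp only [b, D, hω k, div_mul_eq_mul_div, ← sum_div, sub_div, add_div]
    linarith

lemma isTempered_pow (hℓ : IsScale ℓ) (hV : IsQuadraticRecursion F e V h g f)
    (he : IsNoise F μ σ a e) (hq : 1 < q)
    (hfb : ∀ᵐ ω ∂μ, BddAbove (Set.range fun k => f k ω))
    (hfs : ∀ᵐ ω ∂μ, (fun n => ∑ k ∈ range n, f k ω) =O[atTop] ℓ)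
    (hc : ∀ᵐ ω ∂μ, ∃ C, 0 ≤ C ∧ ∀ k, f k ω * V k ω ≤ C * (V k ω - h k ω)) (hma : (2 * m : ℕ) ≤ a) :
    ∀ᵐ ω ∂μ, IsTempered ℓ q (fun k => f k ω) fun k => V k ω ^ m := by
  induction m with
  | zero =>
    filter_upwards [hfs] with ω hω
    simp only [pow_zero]
    exact .of_isBigO hℓ (fun k => hV.quadratic_nonneg k ω) (fun _ => zero_le_one) hω
      (by simpa using hω) (hℓ.const_isLittleO 1).isBigO hq
  | succ m ih =>
    have ht := ih ((Nat.cast_le.2 (by lia)).trans hma)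
    filter_upwards [hV.ae_exists_tendsto_pow_div_and_summable hℓ he hma (by linarith) hfb ht,
      hfs, hc] with ω ⟨⟨l, hl⟩, hsum⟩ hf ⟨C, hC₀, hC⟩
    refine ⟨?_, bddAbove_range_one_add_div_rpow hℓ (fun k => pow_nonneg (hV.nonneg k ω) _)
      (by linarith) hl.bddAbove_range⟩
    have hfsum := hℓ.summable_div_rpow (fun k => hV.quadratic_nonneg k ω) hq hf
    refine (hfsum.add (hsum.mul_left C)).of_nonneg_of_le (fun k => ?_) fun k => ?_
    · have := hV.quadratic_nonneg k ω
      have := hV.nonneg k ω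
      have := hℓ.pos (k + 1)
      positivity
    · rw [← mul_div_assoc, ← mul_div_assoc, ← add_div, mul_add, mul_one]
      have := hℓ.pos (k + 1)
      have := hV.mul_pow_succ_le hC₀ (hC k) m
      gcongr

lemma sum_noise_isLittleO (hℓ : IsScale ℓ) (hV : IsQuadraticRecursion F e V h g f)
    (he : IsNoise F μ σ a e) (ha : 2 * p < a) (hmp : m + 1 ≤ p) {j : ℕ} (hj : j < 2 * m + 2)
    (hfb : ∀ᵐ ω ∂μ, BddAbove (Set.range fun k => f k ω))
    (ht : ∀ q > 1, ∀ᵐ ω ∂μ, IsTempered ℓ q (fun k => f k ω) fun k => V k ω ^ (m + 1)) :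
    ∀ᵐ ω ∂μ, (fun n => ∑ k ∈ range n, quadPowCoeff (h k ω) (g k ω) (f k ω) (m + 1) (j + 1)
      * (e k ω ^ (j + 1) - condMoment F μ e (j + 1) k ω)) =o[atTop] ℓ := by
  obtain ⟨r, hr₁, hr₂, hjr, hjra⟩ := exists_chow_exponent (j := j + 1) (by lia) ha (by lia) (by lia)
  -- `τ < r` because the `e ^ (j + 1)`-term has degree less than `m + 1` in `h`.
  let τ := max 1 ((2 * (m + 1 : ℕ) - (j + 1 : ℕ)) * r / (2 * (m + 1 : ℕ)))
  have hτ₁ : 1 ≤ τ := le_max_left _ _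
  have hτr : τ < r := by
    refine max_lt hr₁ ((div_lt_iff₀ (by positivity)).2 ?_)
    push_cast
    nlinarith
  have hsum : ∀ᵐ ω ∂μ, Summable fun k =>
      |quadPowCoeff (h k ω) (g k ω) (f k ω) (m + 1) (j + 1) / ℓ (k + 1)| ^ r := by
    filter_upwards [hfb, ht (r / τ) ((one_lt_div (by linarith)).2 hτr)] with ω hb hω
    exact summable_abs_quadPowCoeff_div_rpow hℓ (by lia) (by lia) (fun k => hV.const_nonneg k ω)
      (fun k => hV.const_le k ω) (fun k => hV.quadratic_nonneg k ω) hb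
      (fun k => hV.sq_linear_le k ω) (by linarith) hjr hτ₁ (div_mul_cancel₀ r (by linarith))
      ((div_le_iff₀' (by positivity)).1 (le_max_right _ _)) hω
  filter_upwards [he.ae_exists_tendsto_sum_mul_pow_sub hr₁.le hr₂ hjra
    (fun k => (hV.stronglyMeasurable_coeff (m + 1) (j + 1) k).mul_const (ℓ (k + 1))⁻¹)
    (by simpa only [div_eq_mul_inv] using hsum)] with ω ⟨l, hl⟩
  refine hℓ.sum_isLittleO_of_tendsto_sum_div (b := l)
    (hl.congr fun n => sum_congr rfl fun k _ => ?_)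
  rw [div_eq_mul_inv]
  ring

lemma sum_drift_isLittleO (hℓ : IsScale ℓ) (hV : IsQuadraticRecursion F e V h g f)
    (he : IsNoise F μ σ a e) {j : ℕ} (hj : (j + 3 : ℕ) ≤ a)
    (hf : ∀ᵐ ω ∂μ, Tendsto (fun k => f k ω) atTop (𝓝 0))
    (hfV : ∀ᵐ ω ∂μ, (fun n => ∑ k ∈ range n, f k ω * (1 + V k ω ^ m)) =O[atTop] ℓ) :
    ∀ᵐ ω ∂μ, (fun n => ∑ k ∈ range n, quadPowCoeff (h k ω) (g k ω) (f k ω) (m + 1) (j + 3)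
      * condMoment F μ e (j + 3) k ω) =o[atTop] ℓ := by
  filter_upwards [he.exists_abs_condMoment_le hj, hf, hfV] with ω ⟨C, hC⟩ hf hfV
  have hw k : 0 ≤ f k ω * (1 + V k ω ^ m) := by
    have := hV.quadratic_nonneg k ω
    have := hV.nonneg k ω
    positivity
  refine hℓ.sum_isLittleO hw hfV ?_
  have hsmall : (fun k => √(f k ω) ^ (j + 1)) =o[atTop] fun _ => (1 : ℝ) :=
    (isLittleO_one_iff ℝ).2 (by simpa using (hf.sqrt.pow (j + 1)))
  have hcoeff : (fun k => quadPowCoeff (h k ω) (g k ω) (f k ω) (m + 1) (j + 3))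
      =o[atTop] fun k => f k ω * (1 + V k ω ^ m) := by
    refine IsBigO.trans_isLittleO (IsBigO.of_bound ((2 * (m + 1)).choose (j + 3))
      (Eventually.of_forall fun k => ?_))
      (by simpa using hsmall.mul_isBigO (isBigO_refl (fun k => f k ω * (1 + V k ω ^ m)) atTop))
    rw [Real.norm_eq_abs, Real.norm_of_nonneg (mul_nonneg (by positivity) (hw k)), ← mul_assoc]
    exact hV.abs_coeff_add_two_le m (j + 1) k ω
  have hmoment : (fun k => condMoment F μ e (j + 3) k ω) =O[atTop] fun _ => (1 : ℝ) :=
    IsBigO.of_bound C (Eventually.of_forall fun k => by simpa using hC k)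
  simpa using hcoeff.mul_isBigO hmoment

/-- `E[V_{k+1} ^ (m+1) | F_k] - h_k ^ (m+1)` is to leading order `σ²` times the `e²`-coefficient. -/
theorem pow_add_sum_sub_isLittleO (hℓ : IsScale ℓ) (hV : IsQuadraticRecursion F e V h g f)
    (he : IsNoise F μ σ a e) (ha : 2 * p < a) (hmp : m + 1 ≤ p)
    (hf : ∀ᵐ ω ∂μ, Tendsto (fun k => f k ω) atTop (𝓝 0))
    (hfV : ∀ᵐ ω ∂μ, (fun n => ∑ k ∈ range n, f k ω * (1 + V k ω ^ m)) =O[atTop] ℓ)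
    (ht : ∀ q > 1, ∀ᵐ ω ∂μ, IsTempered ℓ q (fun k => f k ω) fun k => V k ω ^ (m + 1)) :
    ∀ᵐ ω ∂μ, (fun n => V n ω ^ (m + 1) + ∑ k ∈ range n, (V k ω ^ (m + 1) - h k ω ^ (m + 1))
      - σ ^ 2 * ∑ k ∈ range n, (m + 1) *
          (f k ω * h k ω ^ m + 2 * m * (g k ω ^ 2 * h k ω ^ (m - 1)))) =o[atTop] ℓ := by
  have hmp' : (m : ℝ) + 1 ≤ p := mod_cast hmp
  have hdrift j (hj : j ∈ range (2 * m)) : ((j + 3 : ℕ) : ℝ) ≤ a := by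
    have : (j : ℝ) + 1 ≤ 2 * m := mod_cast mem_range.1 hj
    push_cast
    linarith
  filter_upwards [hV.pow_succ_eq he m, he.condMoment_two,
    ae_isLittleO_sum fun j hj => hV.sum_noise_isLittleO hℓ he ha hmp (mem_range.1 hj)
      (hf.mono fun _ h => h.bddAbove_range) ht,
    ae_isLittleO_sum fun j hj => hV.sum_drift_isLittleO hℓ he (hdrift j hj) hf hfV]
    with ω hpow hs hnoise hdrift
  refine (((hℓ.const_isLittleO (V 0 ω ^ (m + 1))).add hnoise).add hdrift).congr_left fun n => ?_
  have htelescope := sum_range_sub (fun k => V k ω ^ (m + 1)) n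
  simp only [hpow, sum_range_succ' _ (2 * m), zero_add, quadPowCoeff_succ_two, hs] at htelescope
  rw [sum_comm, sum_comm (s := range (2 * m)), mul_sum]
  simp only [sum_add_distrib, sum_sub_distrib] at htelescope ⊢
  simp only [mul_comm (σ ^ 2)]
  linarith

lemma sum_quadratic_isBigO (hV : IsQuadraticRecursion F e V h g f) (hℓ : IsScale ℓ) {ω : Ω}
    (hfV : (fun n => ∑ k ∈ range n, f k ω * V k ω ^ m) =O[atTop] ℓ) :
    (fun n => ∑ k ∈ range n, (m + 1) *
      (f k ω * h k ω ^ m + 2 * m * (g k ω ^ 2 * h k ω ^ (m - 1)))) =O[atTop] ℓ := by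
  have hw k : 0 ≤ f k ω * V k ω ^ m :=
    mul_nonneg (hV.quadratic_nonneg k ω) (pow_nonneg (hV.nonneg k ω) m)
  refine hℓ.sum_isBigO hw hfV (IsBigO.of_bound ((m + 1) * (1 + 2 * m))
    (Eventually.of_forall fun k => ?_))
  have hh := hV.const_nonneg k ω
  have hf := hV.quadratic_nonneg k ω
  rw [Real.norm_of_nonneg (by positivity), Real.norm_of_nonneg (hw k), mul_assoc ((m : ℝ) + 1)]
  gcongr
  have hhV : f k ω * h k ω ^ m ≤ f k ω * V k ω ^ m := by
    gcongr
    exact hV.const_le k ω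
  obtain rfl | hm := m.eq_zero_or_pos
  · simp
  have hg : g k ω ^ 2 * h k ω ^ (m - 1) ≤ f k ω * h k ω ^ m := by
    rw [← mul_pow_sub_one hm.ne' (h k ω), ← mul_assoc]
    gcongr
    exact hV.sq_linear_le k ω
  nlinarith

lemma isBigO_of_contraction (hℓ : IsScale ℓ) (hV : IsQuadraticRecursion F e V h g f)
    (he : IsNoise F μ σ a e) (ha : 2 * p < a)
    (hf : ∀ᵐ ω ∂μ, Tendsto (fun k => f k ω) atTop (𝓝 0))
    (hfs : ∀ᵐ ω ∂μ, (fun n => ∑ k ∈ range n, f k ω) =O[atTop] ℓ)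
    (hc : ∀ᵐ ω ∂μ, ∃ C, 0 ≤ C ∧ ∀ k, f k ω * V k ω ≤ C * (V k ω - h k ω)) (hmp : m ≤ p) :
    ∀ᵐ ω ∂μ, (fun n => ∑ k ∈ range n, f k ω * V k ω ^ m) =O[atTop] ℓ ∧
      (fun n => V n ω ^ m) =O[atTop] ℓ := by
  induction m with
  | zero =>
    filter_upwards [hfs] with ω hω
    exact ⟨by simpa using hω, by simpa using (hℓ.const_isLittleO 1).isBigO⟩
  | succ m ih =>
    have ih := ih (by lia)
    have hma : ((2 * (m + 1) : ℕ) : ℝ) ≤ a :=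
      (show ((2 * (m + 1) : ℕ) : ℝ) ≤ 2 * p by exact_mod_cast Nat.mul_le_mul_left 2 hmp).trans ha.le
    have hrec := hV.pow_add_sum_sub_isLittleO hℓ he ha hmp hf (by
      filter_upwards [hfs, ih] with ω h₁ h₂
      simpa only [mul_add, mul_one, sum_add_distrib] using h₁.add h₂.1)
      fun q hq => hV.isTempered_pow hℓ he hq (hf.mono fun _ h => h.bddAbove_range) hfs hc hma
    filter_upwards [ih, hrec, hc] with ω ⟨ihf, _⟩ hrec ⟨C, hC₀, hC⟩
    have hpow k : 0 ≤ V k ω ^ (m + 1) - h k ω ^ (m + 1) :=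
      sub_nonneg.2 (pow_le_pow_left₀ (hV.const_nonneg k ω) (hV.const_le k ω) _)
    have hVn n : 0 ≤ V n ω ^ (m + 1) := pow_nonneg (hV.nonneg n ω) _
    have hsum n := sum_nonneg fun k (_ : k ∈ range n) => hpow k
    have htotal : (fun n => V n ω ^ (m + 1) + ∑ k ∈ range n,
        (V k ω ^ (m + 1) - h k ω ^ (m + 1))) =O[atTop] ℓ :=
      (hrec.isBigO.add ((hV.sum_quadratic_isBigO hℓ ihf).const_mul_left (σ ^ 2))).congr_left
        fun n => sub_add_cancel _ _
    have hdecr : (fun n => ∑ k ∈ range n, (V k ω ^ (m + 1) - h k ω ^ (m + 1))) =O[atTop] ℓ :=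
      (IsBigO.of_norm_le fun n => by
        rw [Real.norm_of_nonneg (hsum n)]
        linarith [hVn n]).trans htotal
    refine ⟨hℓ.sum_isBigO hpow hdecr (IsBigO.of_bound C (Eventually.of_forall fun k => ?_)),
      (IsBigO.of_norm_le fun n => by
        rw [Real.norm_of_nonneg (hVn n)]
        linarith [hsum n]).trans htotal⟩
    rw [Real.norm_of_nonneg (mul_nonneg (hV.quadratic_nonneg k ω) (hVn k)),
      Real.norm_of_nonneg (hpow k)]
    exact hV.mul_pow_succ_le hC₀ (hC k) m

end Tempered

end IsQuadraticRecursion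

end QuadraticRecursion

section QuadraticForms

variable {ι : Type*} [Fintype ι]

lemma dotProduct_mulVec_self_nonneg {B : Matrix ι ι ℝ} (hB : B.PosSemidef) (x : ι → ℝ) :
    0 ≤ x ⬝ᵥ B *ᵥ x := by
  simpa using hB.dotProduct_mulVec_nonneg x

lemma dotProduct_mulVec_comm {B : Matrix ι ι ℝ} (hB : B.IsHermitian) (x y : ι → ℝ) :
    x ⬝ᵥ B *ᵥ y = y ⬝ᵥ B *ᵥ x := by
  rw [dotProduct_mulVec, dotProduct_comm, ← mulVec_transpose,
    ← conjTranspose_eq_transpose_of_trivial, hB.eq]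

lemma sq_dotProduct_mulVec_le {B : Matrix ι ι ℝ} (hB : B.PosSemidef) (x y : ι → ℝ) :
    (x ⬝ᵥ B *ᵥ y) ^ 2 ≤ (x ⬝ᵥ B *ᵥ x) * (y ⬝ᵥ B *ᵥ y) := by
  classical
  have h := LinearMap.BilinForm.apply_sq_le_of_symm (Matrix.toBilin' B)
    (fun x => by simpa [Matrix.toBilin'_apply'] using dotProduct_mulVec_self_nonneg hB x)
    ⟨fun x y => by
      simpa [Matrix.toBilin'_apply'] using dotProduct_mulVec_comm hB.isHermitian x y⟩ x y
  simpa [Matrix.toBilin'_apply'] using h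

lemma abs_apply_le_mul_sqrt [DecidableEq ι] {B : Matrix ι ι ℝ} (hB : B.PosDef) (x : ι → ℝ) (i : ι) :
    |x i| ≤ √(B⁻¹ i i) * √(x ⬝ᵥ B *ᵥ x) := by
  have hB' : B * B⁻¹ = 1 := B.mul_nonsing_inv ((isUnit_iff_isUnit_det B).1 hB.isUnit)
  have h := sq_dotProduct_mulVec_le hB.posSemidef (B⁻¹ *ᵥ Pi.single i 1) x
  rw [dotProduct_mulVec_comm hB.isHermitian, mulVec_mulVec, hB', one_mulVec,
    dotProduct_single_one, dotProduct_single_one, mulVec_single_one] at h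
  rw [← Real.sqrt_mul hB.inv.posSemidef.diag_nonneg]
  exact Real.abs_le_sqrt h

lemma isBigO_apply_sqrt_dotProduct_mulVec {B : Matrix ι ι ℝ} (hB : B.PosDef)
    (x : ℕ → ι → ℝ) (i : ι) : (fun k => x k i) =O[atTop] fun k => √(x k ⬝ᵥ B *ᵥ x k) := by
  classical
  exact .of_bound _ <| .of_forall fun k => by
    simpa [Real.norm_of_nonneg (Real.sqrt_nonneg _)] using abs_apply_le_mul_sqrt hB (x k) i

lemma dotProduct_mulVec_sub_isLittleO {B : Matrix ι ι ℝ} (hB : B.PosDef)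
    {C : ℕ → Matrix ι ι ℝ} (hC : Tendsto C atTop (𝓝 B)) (x y : ℕ → ι → ℝ) :
    (fun k => x k ⬝ᵥ C k *ᵥ y k - x k ⬝ᵥ B *ᵥ y k) =o[atTop]
      fun k => √(x k ⬝ᵥ B *ᵥ x k) * √(y k ⬝ᵥ B *ᵥ y k) := by
  have hCB (i j : ι) : (fun k => C k i j - B i j) =o[atTop] fun _ => (1 : ℝ) :=
    (isLittleO_one_iff ℝ).2 <| tendsto_sub_nhds_zero_iff.2 <|
      tendsto_pi_nhds.1 (tendsto_pi_nhds.1 hC i) j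
  have hsum : (fun k => ∑ i, x k i * ∑ j, (C k i j - B i j) * y k j) =o[atTop]
      fun k => √(x k ⬝ᵥ B *ᵥ x k) * √(y k ⬝ᵥ B *ᵥ y k) :=
    .fun_sum fun i _ => (isBigO_apply_sqrt_dotProduct_mulVec hB x i).mul_isLittleO <|
      .fun_sum fun j _ => by
        simpa using (hCB i j).mul_isBigO (isBigO_apply_sqrt_dotProduct_mulVec hB y j)
  refine hsum.congr_left fun k => ?_
  rw [← dotProduct_sub, ← sub_mulVec]
  rfl

lemma tendsto_natCast_smul_inv [DecidableEq ι] {A : ℕ → Matrix ι ι ℝ} {L : Matrix ι ι ℝ}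
    (hL : IsUnit L) (hA : ∀ n, IsUnit (A n))
    (h : Tendsto (fun n : ℕ => (n : ℝ)⁻¹ • A n) atTop (𝓝 L)) :
    Tendsto (fun n : ℕ => (n : ℝ) • (A n)⁻¹) atTop (𝓝 L⁻¹) := by
  have hinv : ContinuousAt (Inv.inv : Matrix ι ι ℝ → _) L := by
    refine continuousAt_matrix_inv L ?_
    rw [Ring.inverse_eq_inv']
    exact continuousAt_inv₀ ((isUnit_iff_isUnit_det L).1 hL).ne_zero
  refine (hinv.tendsto.comp h).congr' ?_
  filter_upwards [eventually_ne_atTop 0] with n hn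
  have hn' : (n : ℝ) ≠ 0 := Nat.cast_ne_zero.2 hn
  simpa [Units.smul_def] using
    Matrix.inv_smul' (A n) (Units.mk0 (n : ℝ)⁻¹ (inv_ne_zero hn'))
      ((isUnit_iff_isUnit_det _).1 (hA n))

lemma stronglyMeasurable_matrix_inv [DecidableEq ι] {Ω : Type*} {m0 : MeasurableSpace Ω}
    {A : Ω → Matrix ι ι ℝ} (hA : StronglyMeasurable A) :
    StronglyMeasurable fun ω => (A ω)⁻¹ := by
  simp only [Matrix.inv_def, Ring.inverse_eq_inv']
  have hdet : StronglyMeasurable fun ω => (A ω).det :=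
    (continuous_id.matrix_det).comp_stronglyMeasurable hA
  have hadj : StronglyMeasurable fun ω => (A ω).adjugate :=
    (continuous_id.matrix_adjugate).comp_stronglyMeasurable hA
  exact hdet.measurable.inv.stronglyMeasurable.smul hadj

end QuadraticForms

section WeightedWalk

variable {Ω ι : Type*} {m0 : MeasurableSpace Ω} {F : Filtration ℕ m0}
  {e : ℕ → Ω → ℝ} {Φ N : ℕ → Ω → ι → ℝ} {W : ℕ → Ω → Matrix ι ι ℝ}

/-- The vector-valued martingale `N` with increments `e k • Φ k`, where `Φ k` is known at time
`k`. -/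
structure IsNoiseDrivenWalk (F : Filtration ℕ m0) (e : ℕ → Ω → ℝ) (Φ N : ℕ → Ω → ι → ℝ) :
    Prop where
  stronglyMeasurable_zero : StronglyMeasurable[F 0] (N 0)
  stronglyMeasurable_direction : ∀ k, StronglyMeasurable[F k] (Φ k)
  stronglyMeasurable_noise : ∀ k, StronglyMeasurable[F (k + 1)] (e k)
  step : ∀ k ω, N (k + 1) ω = N k ω + e k ω • Φ k ω

/-- A predictable sequence of positive semidefinite weights, nonincreasing in the Loewner order:
the Lyapunov functions of the proof are the energies `N kᵗ * W k * N k`. -/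
structure IsDecreasingWeight (F : Filtration ℕ m0) (W : ℕ → Ω → Matrix ι ι ℝ) : Prop where
  stronglyMeasurable_zero : StronglyMeasurable[F 0] (W 0)
  stronglyMeasurable_succ : ∀ k, StronglyMeasurable[F k] (W (k + 1))
  posSemidef : ∀ k ω, (W k ω).PosSemidef
  posSemidef_sub : ∀ k ω, (W k ω - W (k + 1) ω).PosSemidef

lemma IsNoiseDrivenWalk.stronglyMeasurable (hN : IsNoiseDrivenWalk F e Φ N) (k : ℕ) :
    StronglyMeasurable[F k] (N k) := by
  induction k with
  | zero => exact hN.stronglyMeasurable_zero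
  | succ k ih =>
    have hle := F.mono k.le_succ
    rw [funext (hN.step k)]
    exact (ih.mono hle).add
      ((hN.stronglyMeasurable_noise k).smul ((hN.stronglyMeasurable_direction k).mono hle))

lemma IsDecreasingWeight.stronglyMeasurable (hW : IsDecreasingWeight F W) :
    ∀ k, StronglyMeasurable[F k] (W k)
  | 0 => hW.stronglyMeasurable_zero
  | k + 1 => (hW.stronglyMeasurable_succ k).mono (F.mono k.le_succ)

lemma isDecreasingWeight_inv_smul {B : Matrix ι ι ℝ} (hB : B.PosSemidef) {c : ℕ → Ω → ℝ}
    (hpos : ∀ k ω, 0 < c k ω) (hmono : ∀ k ω, c k ω ≤ c (k + 1) ω)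
    (hzero : StronglyMeasurable[F 0] (c 0)) (hsucc : ∀ k, StronglyMeasurable[F k] (c (k + 1))) :
    IsDecreasingWeight F fun k ω => (c k ω)⁻¹ • B where
  stronglyMeasurable_zero := hzero.measurable.inv.stronglyMeasurable.smul_const B
  stronglyMeasurable_succ k := (hsucc k).measurable.inv.stronglyMeasurable.smul_const B
  posSemidef k ω := hB.smul (inv_nonneg.2 (hpos k ω).le)
  posSemidef_sub k ω := by
    rw [← sub_smul]
    exact hB.smul (sub_nonneg.2 (inv_anti₀ (hpos k ω) (hmono k ω)))

variable [Fintype ι]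

lemma stronglyMeasurable_dotProduct_mulVec {C : Ω → Matrix ι ι ℝ} {x y : Ω → ι → ℝ}
    (hx : StronglyMeasurable x) (hC : StronglyMeasurable C) (hy : StronglyMeasurable y) :
    StronglyMeasurable fun ω => x ω ⬝ᵥ C ω *ᵥ y ω :=
  (by fun_prop : Continuous fun z : (ι → ℝ) × Matrix ι ι ℝ × (ι → ℝ) => z.1 ⬝ᵥ z.2.1 *ᵥ z.2.2)
    |>.comp_stronglyMeasurable (hx.prodMk (hC.prodMk hy))

lemma dotProduct_mulVec_add_smul_self {B : Matrix ι ι ℝ} (hB : B.IsHermitian) (x y : ι → ℝ)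
    (c : ℝ) :
    (x + c • y) ⬝ᵥ B *ᵥ (x + c • y) =
      x ⬝ᵥ B *ᵥ x + 2 * (y ⬝ᵥ B *ᵥ x) * c + (y ⬝ᵥ B *ᵥ y) * c ^ 2 := by
  simp only [mulVec_add, mulVec_smul, add_dotProduct, dotProduct_add, smul_dotProduct,
    dotProduct_smul, smul_eq_mul, dotProduct_mulVec_comm hB x y]
  ring

theorem IsNoiseDrivenWalk.isQuadraticRecursion (hN : IsNoiseDrivenWalk F e Φ N)
    (hW : IsDecreasingWeight F W) :
    IsQuadraticRecursion F e (fun k ω => N k ω ⬝ᵥ W k ω *ᵥ N k ω)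
      (fun k ω => N k ω ⬝ᵥ W (k + 1) ω *ᵥ N k ω) (fun k ω => Φ k ω ⬝ᵥ W (k + 1) ω *ᵥ N k ω)
      (fun k ω => Φ k ω ⬝ᵥ W (k + 1) ω *ᵥ Φ k ω) where
  stronglyMeasurable k := stronglyMeasurable_dotProduct_mulVec (m0 := F k)
    (hN.stronglyMeasurable k) (hW.stronglyMeasurable k) (hN.stronglyMeasurable k)
  stronglyMeasurable_const k := stronglyMeasurable_dotProduct_mulVec (m0 := F k)
    (hN.stronglyMeasurable k) (hW.stronglyMeasurable_succ k) (hN.stronglyMeasurable k)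
  stronglyMeasurable_linear k := stronglyMeasurable_dotProduct_mulVec (m0 := F k)
    (hN.stronglyMeasurable_direction k) (hW.stronglyMeasurable_succ k) (hN.stronglyMeasurable k)
  stronglyMeasurable_quadratic k := stronglyMeasurable_dotProduct_mulVec (m0 := F k)
    (hN.stronglyMeasurable_direction k) (hW.stronglyMeasurable_succ k)
    (hN.stronglyMeasurable_direction k)
  step k ω := by
    simp only [hN.step, dotProduct_mulVec_add_smul_self (hW.posSemidef (k + 1) ω).isHermitian]
  const_nonneg k ω := dotProduct_mulVec_self_nonneg (hW.posSemidef (k + 1) ω) _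
  const_le k ω := by
    simpa [sub_mulVec] using dotProduct_mulVec_self_nonneg (hW.posSemidef_sub k ω) (N k ω)
  quadratic_nonneg k ω := dotProduct_mulVec_self_nonneg (hW.posSemidef (k + 1) ω) _
  sq_linear_le k ω := sq_dotProduct_mulVec_le (hW.posSemidef (k + 1) ω) _ _

end WeightedWalk

section EnergyBalance

variable {ℓ u φ γ w V h g f : ℕ → ℝ} {p m : ℕ}

/-- The a priori bounds of a quadratic recursion of size `u` driven with intensity `φ`: on the
scale `ℓ`, the powers of `u` up to `p` and their sums weighted by `φ` are bounded. -/
structure HasEnergyBounds (ℓ : ℕ → ℝ) (p : ℕ) (φ u : ℕ → ℝ) : Prop where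
  tendsto : Tendsto φ atTop (𝓝 0)
  sum_isBigO : ∀ m ≤ p, (fun n => ∑ k ∈ range n, φ k * u k ^ m) =O[atTop] ℓ
  pow_isBigO : ∀ m ≤ p, (fun n => u n ^ m) =O[atTop] ℓ

lemma HasEnergyBounds.congr (hℓ : IsScale ℓ) (hb : HasEnergyBounds ℓ p φ u) (hφ : ∀ k, 0 ≤ φ k)
    (hu : ∀ k, 0 ≤ u k) (hf : f ~[atTop] φ) (hV : V ~[atTop] u) : HasEnergyBounds ℓ p f V where
  tendsto := hf.symm.tendsto_nhds hb.tendsto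
  sum_isBigO m hm := hℓ.sum_isBigO (fun k => mul_nonneg (hφ k) (pow_nonneg (hu k) m))
    (hb.sum_isBigO m hm) (hf.mul (hV.pow m)).isBigO
  pow_isBigO m hm := (hV.pow m).isBigO.trans (hb.pow_isBigO m hm)

/-- The coefficients `V`, `h`, `g`, `f` of a quadratic recursion are asymptotic to reference
quantities: `V` and `h` to `u`, `g` to `γ` and `f` to `φ`. -/
structure IsAsymptoticTo (u φ γ V h g f : ℕ → ℝ) : Prop where
  nonneg : ∀ k, 0 ≤ u k
  quadratic_nonneg : ∀ k, 0 ≤ φ k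
  sq_linear_le : ∀ k, γ k ^ 2 ≤ φ k * u k
  isEquivalent : V ~[atTop] u
  const_isEquivalent : h ~[atTop] u
  quadratic_isEquivalent : f ~[atTop] φ
  sq_linear_sub : (fun k => g k ^ 2 - γ k ^ 2) =o[atTop] fun k => φ k * u k

namespace IsAsymptoticTo

lemma sq_linear_isBigO (hr : IsAsymptoticTo u φ γ V h g f) :
    (fun k => γ k ^ 2) =O[atTop] fun k => φ k * u k :=
  .of_norm_le fun k => by simpa using hr.sq_linear_le k

lemma sq_linear_mul_pow_sub_isLittleO (hr : IsAsymptoticTo u φ γ V h g f) (m : ℕ) :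
    (fun k => g k ^ 2 * h k ^ m - γ k ^ 2 * u k ^ m) =o[atTop] fun k => φ k * u k ^ (m + 1) := by
  have hsum : (fun k => (g k ^ 2 - γ k ^ 2) * h k ^ m + γ k ^ 2 * (h k ^ m - u k ^ m))
      =o[atTop] fun k => φ k * u k * u k ^ m :=
    (hr.sq_linear_sub.mul_isBigO (hr.const_isEquivalent.pow m).isBigO).add
      (hr.sq_linear_isBigO.mul_isLittleO (hr.const_isEquivalent.pow m))
  exact hsum.congr (fun k => by ring) fun k => by ring

lemma sum_quadratic_sub_isLittleO (hr : IsAsymptoticTo u φ γ V h g f) (hℓ : IsScale ℓ)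
    (hb : HasEnergyBounds ℓ p φ u) (hmp : m ≤ p) :
    (fun n => ∑ k ∈ range n, (f k * h k ^ m + 2 * m * (g k ^ 2 * h k ^ (m - 1))) -
      ∑ k ∈ range n, (φ k * u k ^ m + 2 * m * (γ k ^ 2 * u k ^ (m - 1)))) =o[atTop] ℓ := by
  have hlinear : (fun k => 2 * m * (g k ^ 2 * h k ^ (m - 1) - γ k ^ 2 * u k ^ (m - 1)))
      =o[atTop] fun k => φ k * u k ^ m := by
    obtain _ | m := m
    · simp
    · exact (hr.sq_linear_mul_pow_sub_isLittleO m).const_mul_left _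
  have hquadratic : (fun k => f k * h k ^ m - φ k * u k ^ m) =o[atTop] fun k => φ k * u k ^ m :=
    hr.quadratic_isEquivalent.mul (hr.const_isEquivalent.pow m)
  refine (hℓ.sum_isLittleO
    (fun k => mul_nonneg (hr.quadratic_nonneg k) (pow_nonneg (hr.nonneg k) m))
    (hb.sum_isBigO m hmp) (hquadratic.add hlinear)).congr_left fun n => ?_
  rw [← sum_sub_distrib]
  exact sum_congr rfl fun k _ => by ring

lemma pow_succ_sub_isLittleO (hr : IsAsymptoticTo u φ γ V h g f) (m : ℕ) :
    (fun k => V k ^ (m + 1) - h k ^ (m + 1) - (m + 1) * (u k ^ m * (V k - h k)))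
      =o[atTop] fun k => u k ^ m * (V k - h k) := by
  have hterm i (hi : i ∈ range (m + 1)) :
      (fun k => V k ^ i * h k ^ (m - i) - u k ^ m) =o[atTop] fun k => u k ^ m := by
    have hprod := (hr.isEquivalent.pow i).mul (hr.const_isEquivalent.pow (m - i))
    rwa [← pow_add, Nat.add_sub_cancel' (mem_range_succ_iff.1 hi)] at hprod
  refine ((IsLittleO.fun_sum hterm).mul_isBigO
    (isBigO_refl (fun k => V k - h k) atTop)).congr_left fun k => ?_
  have := geom_sum₂_mul (V k) (h k) (m + 1)
  simp only [Nat.add_sub_cancel] at this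
  rw [sum_sub_distrib, sub_mul, this]
  simp
  ring

lemma sum_pow_sub_isLittleO (hr : IsAsymptoticTo u φ γ V h g f) (hℓ : IsScale ℓ)
    (hb : HasEnergyBounds ℓ p φ u) (hmp : m + 1 ≤ p) (hh : ∀ k, 0 ≤ h k) (hV : ∀ k, h k ≤ V k)
    (hsum : (fun n => ∑ k ∈ range n, (V k ^ (m + 1) - h k ^ (m + 1))) =O[atTop] ℓ)
    (hw : (fun k => V k - h k - w k) =o[atTop] fun k => φ k * u k + (V k - h k)) :
    (fun n => ∑ k ∈ range n, (V k ^ (m + 1) - h k ^ (m + 1)) -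
      (m + 1) * ∑ k ∈ range n, w k * u k ^ m) =o[atTop] ℓ := by
  have hloss k : 0 ≤ V k - h k := sub_nonneg.2 (hV k)
  have hφu k : 0 ≤ φ k * u k := mul_nonneg (hr.quadratic_nonneg k) (hr.nonneg k)
  have hum k : 0 ≤ u k ^ m := pow_nonneg (hr.nonneg k) m
  have hpow : (fun n => ∑ k ∈ range n, u k ^ m * (V k - h k)) =O[atTop] ℓ := by
    refine hℓ.sum_isBigO (fun k => sub_nonneg.2 (pow_le_pow_left₀ (hh k) (hV k) _)) hsum
      (((hr.isEquivalent.pow m).symm.isBigO.mul (isBigO_refl _ _)).trans (.of_norm_le fun k => ?_))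
    rw [Pi.pow_apply, Real.norm_of_nonneg
      (mul_nonneg (pow_nonneg ((hh k).trans (hV k)) m) (hloss k))]
    exact pow_mul_sub_le_pow_sub_pow (hh k) (hV k) m
  have hmaj : (fun n => ∑ k ∈ range n, u k ^ m * (φ k * u k + (V k - h k))) =O[atTop] ℓ := by
    refine ((hb.sum_isBigO (m + 1) hmp).add hpow).congr_left fun n => ?_
    rw [← sum_add_distrib]
    exact sum_congr rfl fun k _ => by ring
  have hdiff : (fun k => V k ^ (m + 1) - h k ^ (m + 1) - (m + 1) * (u k ^ m * (V k - h k)) +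
      (m + 1) * (u k ^ m * (V k - h k - w k)))
      =o[atTop] fun k => u k ^ m * (φ k * u k + (V k - h k)) :=
    ((hr.pow_succ_sub_isLittleO m).trans_le fun k => by
      rw [Real.norm_of_nonneg (mul_nonneg (hum k) (hloss k)),
        Real.norm_of_nonneg (mul_nonneg (hum k) (add_nonneg (hφu k) (hloss k)))]
      exact mul_le_mul_of_nonneg_left (le_add_of_nonneg_left (hφu k)) (hum k)).add
    (((isBigO_refl _ _).mul_isLittleO hw).const_mul_left _)
  refine (hℓ.sum_isLittleO (fun k => mul_nonneg (hum k) (add_nonneg (hφu k) (hloss k))) hmaj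
    hdiff).congr_left fun n => ?_
  rw [mul_sum, ← sum_sub_distrib]
  exact sum_congr rfl fun k _ => by ring

end IsAsymptoticTo

variable {Ω : Type*} {m0 : MeasurableSpace Ω} {μ : Measure Ω} {F : Filtration ℕ m0}
  {σ a : ℝ}

/-- The mismatch, at time `n`, in the balance of the energy `u ^ (m + 1)`: what is left of it plus
what the drift `w` of the weights has dissipated, minus what the noise has injected. -/
def energyImbalance (σ : ℝ) (u φ γ w : ℕ → ℝ) (m n : ℕ) : ℝ :=
  u n ^ (m + 1) + (m + 1) * ∑ k ∈ range n, w k * u k ^ m -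
    σ ^ 2 * ((m + 1) * ∑ k ∈ range n, (φ k * u k ^ m + 2 * m * (γ k ^ 2 * u k ^ (m - 1))))

theorem IsQuadraticRecursion.energyImbalance_isLittleO [IsFiniteMeasure μ]
    {e V h g f u φ γ w : ℕ → Ω → ℝ}
    (hℓ : IsScale ℓ) (hV : IsQuadraticRecursion F e V h g f) (he : IsNoise F μ σ a e)
    (ha : 2 * p < a) (hmp : m + 1 ≤ p)
    (hb : ∀ᵐ ω ∂μ, HasEnergyBounds ℓ p (fun k => φ k ω) fun k => u k ω)
    (hr : ∀ᵐ ω ∂μ, IsAsymptoticTo (fun k => u k ω) (fun k => φ k ω) (fun k => γ k ω)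
      (fun k => V k ω) (fun k => h k ω) (fun k => g k ω) fun k => f k ω)
    (hw : ∀ᵐ ω ∂μ, (fun k => V k ω - h k ω - w k ω) =o[atTop]
      fun k => φ k ω * u k ω + (V k ω - h k ω)) :
    ∀ᵐ ω ∂μ, energyImbalance σ (fun k => u k ω) (fun k => φ k ω) (fun k => γ k ω)
      (fun k => w k ω) m =o[atTop] ℓ := by
  have hm : m ≤ p := m.le_succ.trans hmp
  have hbV : ∀ᵐ ω ∂μ, HasEnergyBounds ℓ p (fun k => f k ω) fun k => V k ω := by
    filter_upwards [hb, hr] with ω hb hr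
    exact hb.congr hℓ hr.quadratic_nonneg hr.nonneg hr.quadratic_isEquivalent hr.isEquivalent
  have hrec := hV.pow_add_sum_sub_isLittleO hℓ he ha hmp (hbV.mono fun _ h => h.tendsto)
    (hbV.mono fun ω h => by
      simpa only [mul_add, sum_add_distrib, pow_zero] using
        (h.sum_isBigO 0 p.zero_le).add (h.sum_isBigO m hm))
    fun q hq => hbV.mono fun ω h => .of_isBigO hℓ (hV.quadratic_nonneg · ω)
      (fun k => pow_nonneg (hV.nonneg k ω) _) (by simpa using h.sum_isBigO 0 p.zero_le)
      (h.sum_isBigO _ hmp) (h.pow_isBigO _ hmp) hq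
  filter_upwards [hb, hr, hw, hbV, hrec] with ω hb hr hw hbV hrec
  have hdecr := ((hrec.isBigO.sub (hbV.pow_isBigO _ hmp)).add
    ((hV.sum_quadratic_isBigO hℓ (hbV.sum_isBigO m hm)).const_mul_left (σ ^ 2))).congr_left
      (g := ℓ) fun n => show _ = ∑ k ∈ range n, (V k ω ^ (m + 1) - h k ω ^ (m + 1)) by ring
  have hpow : (fun n => V n ω ^ (m + 1) - u n ω ^ (m + 1)) =o[atTop] ℓ :=
    IsLittleO.trans_isBigO (hr.isEquivalent.pow (m + 1)) (hb.pow_isBigO _ hmp)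
  have hloss := hr.sum_pow_sub_isLittleO hℓ hb hmp (hV.const_nonneg · ω) (hV.const_le · ω) hdecr hw
  have hgain := (hr.sum_quadratic_sub_isLittleO hℓ hb hm).const_mul_left (σ ^ 2 * (m + 1))
  refine (((hrec.sub hpow).sub hloss).add hgain).congr_left fun n => ?_
  rw [energyImbalance, ← mul_sum]
  ring

end EnergyBalance

section Normalization

lemma tendsto_succ_smul {E : Type*} [AddCommGroup E] [Module ℝ E] [TopologicalSpace E]
    [ContinuousSMul ℝ E] {W : ℕ → E} {B : E}
    (hW : Tendsto (fun k : ℕ => (k : ℝ) • W k) atTop (𝓝 B)) :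
    Tendsto (fun k : ℕ => ((k : ℝ) + 1) • W k) atTop (𝓝 B) := by
  have hratio : Tendsto (fun k : ℕ => 1 + (k : ℝ)⁻¹) atTop (𝓝 1) := by
    simpa using tendsto_inv_atTop_nhds_zero_nat.const_add (1 : ℝ)
  have hlim := hratio.smul hW
  rw [one_smul] at hlim
  refine hlim.congr' ?_
  filter_upwards [eventually_ne_atTop 0] with k hk
  rw [smul_smul, add_mul, one_mul, inv_mul_cancel₀ (Nat.cast_ne_zero.2 hk)]

variable {ι : Type*} [Fintype ι]

/-- The normalized bilinear form `x_kᵗ B y_k / (k + 1)` along two sequences of vectors. -/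
def scaledForm (B : Matrix ι ι ℝ) (x y : ℕ → ι → ℝ) (k : ℕ) : ℝ :=
  x k ⬝ᵥ B *ᵥ y k / (k + 1)

lemma scaledForm_self_nonneg {B : Matrix ι ι ℝ} (hB : B.PosSemidef) (x : ℕ → ι → ℝ) (k : ℕ) :
    0 ≤ scaledForm B x x k :=
  div_nonneg (dotProduct_mulVec_self_nonneg hB _) (by positivity)

lemma sq_scaledForm_le {B : Matrix ι ι ℝ} (hB : B.PosSemidef) (x y : ℕ → ι → ℝ) (k : ℕ) :
    scaledForm B x y k ^ 2 ≤ scaledForm B x x k * scaledForm B y y k := by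
  rw [scaledForm, scaledForm, scaledForm, div_pow, div_mul_div_comm, ← sq]
  gcongr
  exact sq_dotProduct_mulVec_le hB _ _

variable {B : Matrix ι ι ℝ} {C W : ℕ → Matrix ι ι ℝ}

lemma dotProduct_mulVec_sub_scaledForm_isLittleO (hB : B.PosDef)
    (hC : Tendsto (fun k : ℕ => ((k : ℝ) + 1) • C k) atTop (𝓝 B)) (x y : ℕ → ι → ℝ) :
    (fun k => x k ⬝ᵥ C k *ᵥ y k - scaledForm B x y k) =o[atTop]
      fun k => √(scaledForm B x x k) * √(scaledForm B y y k) := by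
  refine ((isBigO_refl (fun k : ℕ => ((k : ℝ) + 1)⁻¹) atTop).mul_isLittleO
    (dotProduct_mulVec_sub_isLittleO hB hC x y)).congr (fun k => ?_) fun k => ?_
  · rw [smul_mulVec, dotProduct_smul, smul_eq_mul, scaledForm]
    field_simp
  · rw [scaledForm, scaledForm, Real.sqrt_div' _ (by positivity), Real.sqrt_div' _ (by positivity),
      div_mul_div_comm, Real.mul_self_sqrt (by positivity)]
    ring

lemma dotProduct_mulVec_isEquivalent_scaledForm (hB : B.PosDef)
    (hC : Tendsto (fun k : ℕ => ((k : ℝ) + 1) • C k) atTop (𝓝 B)) (x : ℕ → ι → ℝ) :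
    (fun k => x k ⬝ᵥ C k *ᵥ x k) ~[atTop] scaledForm B x x :=
  (dotProduct_mulVec_sub_scaledForm_isLittleO hB hC x x).congr_right fun k =>
    Real.mul_self_sqrt (scaledForm_self_nonneg hB.posSemidef x k)

lemma sq_dotProduct_mulVec_sub_isLittleO (hB : B.PosDef)
    (hC : Tendsto (fun k : ℕ => ((k : ℝ) + 1) • C k) atTop (𝓝 B)) (x y : ℕ → ι → ℝ) :
    (fun k => (x k ⬝ᵥ C k *ᵥ y k) ^ 2 - scaledForm B x y k ^ 2) =o[atTop]
      fun k => scaledForm B x x k * scaledForm B y y k := by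
  have hform : scaledForm B x y =O[atTop]
      fun k => √(scaledForm B x x k) * √(scaledForm B y y k) := .of_norm_le fun k => by
    rw [← Real.sqrt_mul (scaledForm_self_nonneg hB.posSemidef x k)]
    exact Real.abs_le_sqrt (sq_scaledForm_le hB.posSemidef x y k)
  have hdiff := dotProduct_mulVec_sub_scaledForm_isLittleO hB hC x y
  refine (hdiff.mul_isBigO (hdiff.isBigO.add (hform.const_mul_left 2))).congr
    (fun k => by ring) fun k => ?_
  rw [mul_mul_mul_comm, Real.mul_self_sqrt (scaledForm_self_nonneg hB.posSemidef x k),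
    Real.mul_self_sqrt (scaledForm_self_nonneg hB.posSemidef y k)]

lemma isAsymptoticTo_scaledForm (hB : B.PosDef)
    (hW : Tendsto (fun k : ℕ => (k : ℝ) • W k) atTop (𝓝 B)) (N Φ : ℕ → ι → ℝ) :
    IsAsymptoticTo (scaledForm B N N) (scaledForm B Φ Φ) (scaledForm B Φ N)
      (fun k => N k ⬝ᵥ W k *ᵥ N k) (fun k => N k ⬝ᵥ W (k + 1) *ᵥ N k)
      (fun k => Φ k ⬝ᵥ W (k + 1) *ᵥ N k) fun k => Φ k ⬝ᵥ W (k + 1) *ᵥ Φ k := by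
  have hW' : Tendsto (fun k : ℕ => ((k : ℝ) + 1) • W (k + 1)) atTop (𝓝 B) := by
    simpa using (tendsto_add_atTop_iff_nat 1).2 hW
  exact
    { nonneg := scaledForm_self_nonneg hB.posSemidef N
      quadratic_nonneg := scaledForm_self_nonneg hB.posSemidef Φ
      sq_linear_le := sq_scaledForm_le hB.posSemidef Φ N
      isEquivalent := dotProduct_mulVec_isEquivalent_scaledForm hB (tendsto_succ_smul hW) N
      const_isEquivalent := dotProduct_mulVec_isEquivalent_scaledForm hB hW' N
      quadratic_isEquivalent := dotProduct_mulVec_isEquivalent_scaledForm hB hW' Φ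
      sq_linear_sub := sq_dotProduct_mulVec_sub_isLittleO hB hW' Φ N }

end Normalization

section InformationMatrix

variable {ι : Type*} {S L : Matrix ι ι ℝ} {Φ : ℕ → ι → ℝ}

/-- The information matrix `S + ∑_{l < k} Φ_l Φ_lᵗ`, which is `S_{k-1}` in the notation of the
statement. -/
def infoMatrix (S : Matrix ι ι ℝ) (Φ : ℕ → ι → ℝ) (k : ℕ) : Matrix ι ι ℝ :=
  S + ∑ l ∈ range k, vecMulVec (Φ l) (Φ l)

lemma infoMatrix_succ (S : Matrix ι ι ℝ) (Φ : ℕ → ι → ℝ) (k : ℕ) :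
    infoMatrix S Φ (k + 1) = infoMatrix S Φ k + vecMulVec (Φ k) (Φ k) := by
  simp only [infoMatrix, sum_range_succ, add_assoc]

lemma posDef_infoMatrix [Finite ι] (hS : S.PosDef) (Φ : ℕ → ι → ℝ) (k : ℕ) :
    (infoMatrix S Φ k).PosDef :=
  hS.add_posSemidef <| posSemidef_sum _ fun l _ => by
    simpa using posSemidef_vecMulVec_self_star (Φ l)

variable [Fintype ι] [DecidableEq ι]

/-- The Sherman–Morrison formula, in terms of quadratic forms. -/
lemma dotProduct_infoMatrix_inv_sub (hS : S.PosDef) (Φ : ℕ → ι → ℝ) (k : ℕ) (x : ι → ℝ) :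
    x ⬝ᵥ (infoMatrix S Φ k)⁻¹ *ᵥ x - x ⬝ᵥ (infoMatrix S Φ (k + 1))⁻¹ *ᵥ x =
      (1 + Φ k ⬝ᵥ (infoMatrix S Φ k)⁻¹ *ᵥ Φ k) *
        (Φ k ⬝ᵥ (infoMatrix S Φ (k + 1))⁻¹ *ᵥ x) ^ 2 := by
  have hA := posDef_infoMatrix hS Φ k
  have hsub (y z : ι → ℝ) :
      y ⬝ᵥ (infoMatrix S Φ k)⁻¹ *ᵥ z - y ⬝ᵥ (infoMatrix S Φ (k + 1))⁻¹ *ᵥ z =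
        (Φ k ⬝ᵥ (infoMatrix S Φ k)⁻¹ *ᵥ y) * (Φ k ⬝ᵥ (infoMatrix S Φ (k + 1))⁻¹ *ᵥ z) := by
    rw [← dotProduct_sub, ← sub_mulVec, Matrix.inv_sub_inv
      (iff_of_true hA.isUnit (posDef_infoMatrix hS Φ (k + 1)).isUnit), infoMatrix_succ,
      add_sub_cancel_left, mul_vecMulVec, ← mulVec_mulVec, vecMulVec_mulVec,
      op_smul_eq_smul, dotProduct_smul, smul_eq_mul,
      dotProduct_mulVec_comm hA.inv.isHermitian, mul_comm]
  linear_combination hsub x x + Φ k ⬝ᵥ (infoMatrix S Φ (k + 1))⁻¹ *ᵥ x * hsub (Φ k) x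

lemma posSemidef_infoMatrix_inv_sub (hS : S.PosDef) (Φ : ℕ → ι → ℝ) (k : ℕ) :
    ((infoMatrix S Φ k)⁻¹ - (infoMatrix S Φ (k + 1))⁻¹).PosSemidef := by
  have hinv := (posDef_infoMatrix hS Φ k).inv
  refine .of_dotProduct_mulVec_nonneg
    (hinv.isHermitian.sub (posDef_infoMatrix hS Φ (k + 1)).inv.isHermitian) fun x => ?_
  rw [star_trivial, sub_mulVec, dotProduct_sub, dotProduct_infoMatrix_inv_sub hS]
  exact mul_nonneg
    (add_nonneg zero_le_one (dotProduct_mulVec_self_nonneg hinv.posSemidef _)) (sq_nonneg _)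

lemma tendsto_natCast_smul_infoMatrix_inv (hS : S.PosDef) (hL : L.PosDef)
    (h : Tendsto (fun k : ℕ => (k : ℝ)⁻¹ • infoMatrix S Φ k) atTop (𝓝 L)) :
    Tendsto (fun k : ℕ => (k : ℝ) • (infoMatrix S Φ k)⁻¹) atTop (𝓝 L⁻¹) :=
  tendsto_natCast_smul_inv hL.isUnit (fun k => (posDef_infoMatrix hS Φ k).isUnit) h

lemma tendsto_sum_dotProduct_inv_div (hL : L.PosDef)
    (h : Tendsto (fun k : ℕ => (k : ℝ)⁻¹ • infoMatrix S Φ k) atTop (𝓝 L)) :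
    Tendsto (fun k : ℕ => (∑ l ∈ range k, Φ l ⬝ᵥ L⁻¹ *ᵥ Φ l) / k) atTop
      (𝓝 (Fintype.card ι)) := by
  have htrace : Tendsto (fun k : ℕ => (L⁻¹ * ((k : ℝ)⁻¹ • infoMatrix S Φ k)).trace -
      (k : ℝ)⁻¹ * (L⁻¹ * S).trace) atTop (𝓝 ((L⁻¹ * L).trace - 0 * (L⁻¹ * S).trace)) :=
    ((continuous_const.matrix_mul continuous_id).matrix_trace.tendsto L |>.comp h).sub
      (tendsto_inv_atTop_nhds_zero_nat.mul_const _)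
  rw [nonsing_inv_mul _ ((isUnit_iff_isUnit_det L).1 hL.isUnit), trace_one, zero_mul,
    sub_zero] at htrace
  refine htrace.congr fun k => ?_
  simp only [infoMatrix, Matrix.mul_smul, trace_smul, Matrix.mul_add, trace_add, Matrix.mul_sum,
    trace_sum, mul_vecMulVec, trace_vecMulVec, smul_eq_mul, dotProduct_comm (_ *ᵥ _)]
  ring

end InformationMatrix

section Combination

variable {u φ γ w w₁ w₂ : ℕ → ℝ} {d σ : ℝ} {p m : ℕ} {ℓ : ℕ → ℝ}

lemma sum_mul_pow_sub_isLittleO (h₁ : energyImbalance σ u φ γ w₁ m =o[atTop] ℓ)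
    (h₂ : energyImbalance σ u φ γ w₂ m =o[atTop] ℓ) :
    (fun n => ∑ k ∈ range n, w₁ k * u k ^ m - ∑ k ∈ range n, w₂ k * u k ^ m) =o[atTop] ℓ := by
  refine ((h₁.sub h₂).const_mul_left ((m : ℝ) + 1)⁻¹).congr_left fun n => ?_
  rw [energyImbalance, energyImbalance]
  field_simp
  ring

lemma sum_quadratic_sub_harmonic_isLittleO (hd : d ≠ 0)
    (hφ : (fun n => ∑ k ∈ range n, φ k - d * harmonicScale n) =o[atTop] harmonicScale)
    (hclock : ∀ m < p,
      energyImbalance σ u φ γ (fun k => u k / (k + 1)) m =o[atTop] harmonicScale)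
    (htrace : ∀ m < p,
      energyImbalance σ u φ γ (fun k => φ k * u k / d) m =o[atTop] harmonicScale) (hm : m ≤ p) :
    (fun n => ∑ k ∈ range n, φ k * u k ^ m - d * ∑ k ∈ range n, u k ^ m / (k + 1))
      =o[atTop] harmonicScale := by
  obtain _ | m := m
  · refine (hφ.add (isScale_harmonicScale.const_isLittleO d)).congr_left fun n => ?_
    simp [harmonicScale]
    ring
  · refine ((sum_mul_pow_sub_isLittleO (htrace m hm) (hclock m hm)).const_mul_left d).congr_left
      fun n => ?_
    rw [mul_sub, mul_sum, mul_sum, mul_sum]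
    congr 1 <;> refine sum_congr rfl fun k _ => ?_ <;> field_simp <;> ring

lemma sum_linear_sub_harmonic_isLittleO
    (hclock : energyImbalance σ u φ γ (fun k => u k / (k + 1)) m =o[atTop] harmonicScale)
    (hgram : energyImbalance σ u φ γ (fun k => γ k ^ 2) m =o[atTop] harmonicScale) :
    (fun n => ∑ k ∈ range n, γ k ^ 2 * u k ^ m - ∑ k ∈ range n, u k ^ (m + 1) / (k + 1))
      =o[atTop] harmonicScale :=
  (sum_mul_pow_sub_isLittleO hgram hclock).congr_left fun n => by
    congr 1
    exact sum_congr rfl fun k _ => by ring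

theorem sum_pow_div_sub_isLittleO (hd : d ≠ 0)
    (hφ : (fun n => ∑ k ∈ range n, φ k - d * harmonicScale n) =o[atTop] harmonicScale)
    (hclock : ∀ m < p,
      energyImbalance σ u φ γ (fun k => u k / (k + 1)) m =o[atTop] harmonicScale)
    (htrace : ∀ m < p,
      energyImbalance σ u φ γ (fun k => φ k * u k / d) m =o[atTop] harmonicScale)
    (hgram : ∀ m < p, energyImbalance σ u φ γ (fun k => γ k ^ 2) m =o[atTop] harmonicScale)
    (hm : m ≤ p) :
    (fun n => ∑ k ∈ range n, u k ^ m / (k + 1) -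
      (∏ i ∈ range m, σ ^ 2 * (d + 2 * i)) * harmonicScale n) =o[atTop] harmonicScale := by
  induction m with
  | zero =>
    refine (isScale_harmonicScale.const_isLittleO (-1)).congr_left fun n => ?_
    simp [harmonicScale]
  | succ m ih =>
    have hquadratic := sum_quadratic_sub_harmonic_isLittleO hd hφ hclock htrace
      (m.le_succ.trans hm)
    have hlinear : (fun n => m * (∑ k ∈ range n, γ k ^ 2 * u k ^ (m - 1) -
        ∑ k ∈ range n, u k ^ m / (k + 1))) =o[atTop] harmonicScale := by
      obtain _ | m := m
      · simp
      · exact (sum_linear_sub_harmonic_isLittleO (hclock m (by lia))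
          (hgram m (by lia))).const_mul_left _
    refine sub_mul_harmonicScale_isLittleO_of_relaxation m.cast_add_one_pos
      ((((hclock m hm).add (hquadratic.const_mul_left (σ ^ 2 * (m + 1)))).add
        (hlinear.const_mul_left (2 * σ ^ 2 * (m + 1)))).add
        ((ih (m.le_succ.trans hm)).const_mul_left (σ ^ 2 * (d + 2 * m) * (m + 1)))
        |>.congr_left fun n => ?_)
    have hloss : ∑ k ∈ range n, u k / (k + 1) * u k ^ m = ∑ k ∈ range n, u k ^ (m + 1) / (k + 1) :=
      sum_congr rfl fun k _ => by ring
    rw [energyImbalance, hloss, sum_range_succ, prod_range_succ, sum_add_distrib, ← mul_sum]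
    field_simp
    ring

end Combination

section TraceWeight

variable {ι : Type*} [Fintype ι] [DecidableEq ι] {S L : Matrix ι ι ℝ} {Φ : ℕ → ι → ℝ}

/-- The scalar clock `1 + tr (L⁻¹ * ∑_{l < k} Φ_l Φ_lᵗ) / d`, asymptotic to `k`; its increments
carry the quadratic forms `Φ_kᵗ L⁻¹ Φ_k`. -/
def traceClock (L : Matrix ι ι ℝ) (Φ : ℕ → ι → ℝ) (k : ℕ) : ℝ :=
  1 + (∑ l ∈ range k, Φ l ⬝ᵥ L⁻¹ *ᵥ Φ l) / Fintype.card ι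

lemma traceClock_succ (L : Matrix ι ι ℝ) (Φ : ℕ → ι → ℝ) (k : ℕ) :
    traceClock L Φ (k + 1) = traceClock L Φ k + Φ k ⬝ᵥ L⁻¹ *ᵥ Φ k / Fintype.card ι := by
  simp only [traceClock, sum_range_succ, add_div, add_assoc]

lemma traceClock_pos (hL : L.PosDef) (Φ : ℕ → ι → ℝ) (k : ℕ) : 0 < traceClock L Φ k :=
  add_pos_of_pos_of_nonneg one_pos <| div_nonneg
    (sum_nonneg fun _ _ => dotProduct_mulVec_self_nonneg hL.inv.posSemidef _) (Nat.cast_nonneg _)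

lemma traceClock_le_succ (hL : L.PosDef) (Φ : ℕ → ι → ℝ) (k : ℕ) :
    traceClock L Φ k ≤ traceClock L Φ (k + 1) := by
  rw [traceClock_succ, le_add_iff_nonneg_right]
  exact div_nonneg (dotProduct_mulVec_self_nonneg hL.inv.posSemidef _) (Nat.cast_nonneg _)

lemma quadratic_mul_energy_eq_card_mul_loss [Nonempty ι] (hL : L.PosDef) (Φ N : ℕ → ι → ℝ)
    (k : ℕ) :
    (Φ k ⬝ᵥ ((traceClock L Φ (k + 1))⁻¹ • L⁻¹) *ᵥ Φ k) *
        (N k ⬝ᵥ ((traceClock L Φ k)⁻¹ • L⁻¹) *ᵥ N k) =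
      Fintype.card ι * (N k ⬝ᵥ ((traceClock L Φ k)⁻¹ • L⁻¹) *ᵥ N k -
        N k ⬝ᵥ ((traceClock L Φ (k + 1))⁻¹ • L⁻¹) *ᵥ N k) := by
  have h₀ := (traceClock_pos hL Φ k).ne'
  have h₁ := (traceClock_pos hL Φ (k + 1)).ne'
  have hquad : Φ k ⬝ᵥ L⁻¹ *ᵥ Φ k =
      Fintype.card ι * (traceClock L Φ (k + 1) - traceClock L Φ k) := by
    rw [traceClock_succ, add_sub_cancel_left, mul_div_cancel₀ _ (by simp)]
  simp only [smul_mulVec, dotProduct_smul, smul_eq_mul, hquad]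
  field_simp

lemma tendsto_natCast_smul_inv_traceClock [Nonempty ι] (hL : L.PosDef)
    (h : Tendsto (fun k : ℕ => (k : ℝ)⁻¹ • infoMatrix S Φ k) atTop (𝓝 L)) :
    Tendsto (fun k : ℕ => (k : ℝ) • ((traceClock L Φ k)⁻¹ • L⁻¹)) atTop (𝓝 L⁻¹) := by
  have hcard : (Fintype.card ι : ℝ) ≠ 0 := by simp
  have hclock : Tendsto (fun k : ℕ => (traceClock L Φ k / k)⁻¹) atTop (𝓝 1) := by
    have hlim := (tendsto_inv_atTop_nhds_zero_nat (𝕜 := ℝ)).add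
      ((tendsto_sum_dotProduct_inv_div hL h).div_const (Fintype.card ι : ℝ))
    rw [div_self hcard, zero_add] at hlim
    refine (by simpa using hlim.inv₀ (by simp) : Tendsto _ _ (𝓝 (1 : ℝ))).congr fun k => ?_
    rw [traceClock]
    ring
  have hsmul := hclock.smul_const L⁻¹
  rw [one_smul] at hsmul
  refine hsmul.congr fun k => ?_
  rw [smul_smul, inv_div, div_eq_mul_inv]

lemma tendsto_sum_dotProduct_inv_div_succ (hL : L.PosDef)
    (h : Tendsto (fun k : ℕ => (k : ℝ)⁻¹ • infoMatrix S Φ k) atTop (𝓝 L)) :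
    Tendsto (fun k : ℕ => (∑ l ∈ range k, Φ l ⬝ᵥ L⁻¹ *ᵥ Φ l) / (k + 1)) atTop
      (𝓝 (Fintype.card ι)) := by
  have hlim := (tendsto_sum_dotProduct_inv_div hL h).mul (tendsto_natCast_div_add_atTop (1 : ℝ))
  rw [mul_one] at hlim
  refine hlim.congr' ?_
  filter_upwards [eventually_ne_atTop 0] with k hk
  have hk' : (k : ℝ) ≠ 0 := Nat.cast_ne_zero.2 hk
  field_simp

lemma tendsto_scaledForm_zero (hL : L.PosDef)
    (h : Tendsto (fun k : ℕ => (k : ℝ)⁻¹ • infoMatrix S Φ k) atTop (𝓝 L)) :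
    Tendsto (scaledForm L⁻¹ Φ Φ) atTop (𝓝 0) := by
  have hlim := ((tendsto_add_atTop_iff_nat 1).2 (tendsto_sum_dotProduct_inv_div hL h)).sub
    (tendsto_sum_dotProduct_inv_div_succ hL h)
  rw [sub_self] at hlim
  refine hlim.congr fun k => ?_
  rw [sum_range_succ, Nat.cast_succ, ← sub_div, add_sub_cancel_left, scaledForm]

lemma sum_scaledForm_sub_isLittleO (hL : L.PosDef)
    (h : Tendsto (fun k : ℕ => (k : ℝ)⁻¹ • infoMatrix S Φ k) atTop (𝓝 L)) :
    (fun n => ∑ k ∈ range n, scaledForm L⁻¹ Φ Φ k - Fintype.card ι * harmonicScale n)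
      =o[atTop] harmonicScale := by
  simpa [sum_range_succ, scaledForm] using
    sum_sub_div_sub_mul_harmonicScale_isLittleO (tendsto_sum_dotProduct_inv_div_succ hL h)

end TraceWeight

section Regression

variable {Ω ι : Type*} {m0 : MeasurableSpace Ω} {μ : Measure Ω} {F : Filtration ℕ m0}
  [Fintype ι] [DecidableEq ι] {e : ℕ → Ω → ℝ} {Φ N : ℕ → Ω → ι → ℝ}
  {S L : Matrix ι ι ℝ} {σ a : ℝ} {p m : ℕ}

/-- A noise-driven walk whose noise and directions satisfy the assumptions of the theorem; in
particular the normalized information matrices of the directions converge to `L`. -/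
structure IsRegressionWalk (F : Filtration ℕ m0) (μ : Measure Ω) (σ a : ℝ) (S L : Matrix ι ι ℝ)
    (e : ℕ → Ω → ℝ) (Φ N : ℕ → Ω → ι → ℝ) : Prop extends IsNoiseDrivenWalk F e Φ N where
  isNoise : IsNoise F μ σ a e
  posDef : S.PosDef
  posDef_limit : L.PosDef
  tendsto_infoMatrix : ∀ᵐ ω ∂μ,
    Tendsto (fun k : ℕ => (k : ℝ)⁻¹ • infoMatrix S (Φ · ω) k) atTop (𝓝 L)

namespace IsRegressionWalk

lemma tendsto_natCast_smul_inv_infoMatrix (hN : IsRegressionWalk F μ σ a S L e Φ N) :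
    ∀ᵐ ω ∂μ, Tendsto (fun k : ℕ => (k : ℝ) • (infoMatrix S (Φ · ω) k)⁻¹) atTop (𝓝 L⁻¹) :=
  hN.tendsto_infoMatrix.mono fun _ h =>
    tendsto_natCast_smul_infoMatrix_inv hN.posDef hN.posDef_limit h

lemma isDecreasingWeight_clock (hN : IsRegressionWalk F μ σ a S L e Φ N) :
    IsDecreasingWeight F fun k (_ : Ω) => ((k : ℝ) + 1)⁻¹ • L⁻¹ :=
  isDecreasingWeight_inv_smul hN.posDef_limit.inv.posSemidef (fun k _ => k.cast_add_one_pos)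
    (fun k _ => by simp) stronglyMeasurable_const fun _ => stronglyMeasurable_const

lemma isDecreasingWeight_traceClock (hN : IsRegressionWalk F μ σ a S L e Φ N) :
    IsDecreasingWeight F fun k ω => (traceClock L (Φ · ω) k)⁻¹ • L⁻¹ :=
  isDecreasingWeight_inv_smul hN.posDef_limit.inv.posSemidef
    (fun k ω => traceClock_pos hN.posDef_limit (Φ · ω) k)
    (fun k ω => traceClock_le_succ hN.posDef_limit (Φ · ω) k)
    (by simpa [traceClock] using stronglyMeasurable_const) fun k =>
      stronglyMeasurable_const.add <| Measurable.stronglyMeasurable <| Measurable.div_const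
        (StronglyMeasurable.measurable <| Finset.stronglyMeasurable_fun_sum _ fun l hl =>
          have hΦ := (hN.stronglyMeasurable_direction l).mono
            (F.mono (Finset.mem_range_succ_iff.1 hl))
          stronglyMeasurable_dotProduct_mulVec (m0 := F k) hΦ stronglyMeasurable_const hΦ) _

lemma isDecreasingWeight_infoMatrix (hN : IsRegressionWalk F μ σ a S L e Φ N) :
    IsDecreasingWeight F fun k ω => (infoMatrix S (Φ · ω) k)⁻¹ where
  stronglyMeasurable_zero := by simpa [infoMatrix] using stronglyMeasurable_const
  stronglyMeasurable_succ k := stronglyMeasurable_matrix_inv (m0 := F k) <|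
    stronglyMeasurable_const.add <| Finset.stronglyMeasurable_fun_sum _ fun l hl =>
      have hΦ := (hN.stronglyMeasurable_direction l).mono (F.mono (Finset.mem_range_succ_iff.1 hl))
      (by fun_prop : Continuous fun x : ι → ℝ => vecMulVec x x).comp_stronglyMeasurable hΦ
  posSemidef k ω := (posDef_infoMatrix hN.posDef (Φ · ω) k).inv.posSemidef
  posSemidef_sub k ω := posSemidef_infoMatrix_inv_sub hN.posDef (Φ · ω) k

lemma isAsymptoticTo_traceClock [Nonempty ι] (hN : IsRegressionWalk F μ σ a S L e Φ N) :
    ∀ᵐ ω ∂μ, IsAsymptoticTo (scaledForm L⁻¹ (N · ω) (N · ω)) (scaledForm L⁻¹ (Φ · ω) (Φ · ω))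
      (scaledForm L⁻¹ (Φ · ω) (N · ω))
      (fun k => N k ω ⬝ᵥ ((traceClock L (Φ · ω) k)⁻¹ • L⁻¹) *ᵥ N k ω)
      (fun k => N k ω ⬝ᵥ ((traceClock L (Φ · ω) (k + 1))⁻¹ • L⁻¹) *ᵥ N k ω)
      (fun k => Φ k ω ⬝ᵥ ((traceClock L (Φ · ω) (k + 1))⁻¹ • L⁻¹) *ᵥ N k ω)
      fun k => Φ k ω ⬝ᵥ ((traceClock L (Φ · ω) (k + 1))⁻¹ • L⁻¹) *ᵥ Φ k ω :=
  hN.tendsto_infoMatrix.mono fun ω h => isAsymptoticTo_scaledForm hN.posDef_limit.inv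
    (tendsto_natCast_smul_inv_traceClock hN.posDef_limit h) (N · ω) (Φ · ω)

lemma hasEnergyBounds [IsFiniteMeasure μ] [Nonempty ι] (hN : IsRegressionWalk F μ σ a S L e Φ N)
    (ha : 2 * p < a) :
    ∀ᵐ ω ∂μ, HasEnergyBounds harmonicScale p (scaledForm L⁻¹ (Φ · ω) (Φ · ω))
      (scaledForm L⁻¹ (N · ω) (N · ω)) := by
  have hℓ := isScale_harmonicScale
  have hf : ∀ᵐ ω ∂μ, Tendsto
      (fun k => Φ k ω ⬝ᵥ ((traceClock L (Φ · ω) (k + 1))⁻¹ • L⁻¹) *ᵥ Φ k ω) atTop (𝓝 0) := by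
    filter_upwards [hN.isAsymptoticTo_traceClock, hN.tendsto_infoMatrix] with ω hr hlim
    exact hr.quadratic_isEquivalent.symm.tendsto_nhds
      (tendsto_scaledForm_zero hN.posDef_limit hlim)
  have hfs : ∀ᵐ ω ∂μ, (fun n => ∑ k ∈ range n,
      Φ k ω ⬝ᵥ ((traceClock L (Φ · ω) (k + 1))⁻¹ • L⁻¹) *ᵥ Φ k ω) =O[atTop] harmonicScale := by
    filter_upwards [hN.isAsymptoticTo_traceClock, hN.tendsto_infoMatrix] with ω hr hlim
    refine hℓ.sum_isBigO hr.quadratic_nonneg ?_ hr.quadratic_isEquivalent.isBigO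
    exact ((sum_scaledForm_sub_isLittleO hN.posDef_limit hlim).isBigO.add
      (isBigO_const_mul_self _ _ _)).congr_left fun n => sub_add_cancel _ _
  have hbounds (m : ℕ) (hm : m ≤ p) :=
    (hN.isQuadraticRecursion hN.isDecreasingWeight_traceClock).isBigO_of_contraction hℓ
      hN.isNoise ha hf hfs (.of_forall fun ω => ⟨_, Nat.cast_nonneg _, fun k =>
        (quadratic_mul_energy_eq_card_mul_loss hN.posDef_limit (Φ · ω) (N · ω) k).le⟩) hm
  filter_upwards [hN.isAsymptoticTo_traceClock, hf,
    ae_all_iff.2 fun m => ae_all_iff.2 (hbounds m)] with ω hr hf hbounds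
  exact HasEnergyBounds.congr hℓ ⟨hf, fun m hm => (hbounds m hm).1, fun m hm => (hbounds m hm).2⟩
    (hN.isQuadraticRecursion hN.isDecreasingWeight_traceClock |>.quadratic_nonneg · ω)
    (fun k => dotProduct_mulVec_self_nonneg
      (hN.isDecreasingWeight_traceClock.posSemidef k ω) (N k ω))
    hr.quadratic_isEquivalent.symm hr.isEquivalent.symm

lemma energyImbalance_isLittleO [IsFiniteMeasure μ] [Nonempty ι]
    (hN : IsRegressionWalk F μ σ a S L e Φ N) (ha : 2 * p < a) {W : ℕ → Ω → Matrix ι ι ℝ}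
    (hW : IsDecreasingWeight F W)
    (hlim : ∀ᵐ ω ∂μ, Tendsto (fun k : ℕ => (k : ℝ) • W k ω) atTop (𝓝 L⁻¹)) {w : ℕ → Ω → ℝ}
    (hw : ∀ᵐ ω ∂μ, (fun k => N k ω ⬝ᵥ W k ω *ᵥ N k ω - N k ω ⬝ᵥ W (k + 1) ω *ᵥ N k ω - w k ω)
      =o[atTop] fun k => scaledForm L⁻¹ (Φ · ω) (Φ · ω) k * scaledForm L⁻¹ (N · ω) (N · ω) k +
        (N k ω ⬝ᵥ W k ω *ᵥ N k ω - N k ω ⬝ᵥ W (k + 1) ω *ᵥ N k ω)) :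
    ∀ᵐ ω ∂μ, ∀ m < p, energyImbalance σ (scaledForm L⁻¹ (N · ω) (N · ω))
      (scaledForm L⁻¹ (Φ · ω) (Φ · ω)) (scaledForm L⁻¹ (Φ · ω) (N · ω)) (fun k => w k ω) m
        =o[atTop] harmonicScale :=
  ae_all_iff.2 fun _ => ae_all_iff.2 fun hm =>
    (hN.isQuadraticRecursion hW).energyImbalance_isLittleO isScale_harmonicScale hN.isNoise ha hm
      (hN.hasEnergyBounds ha)
      (hlim.mono fun ω h => isAsymptoticTo_scaledForm hN.posDef_limit.inv h (N · ω) (Φ · ω)) hw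

end IsRegressionWalk

end Regression

section Balances

lemma isLittleO_add_of_nonneg {x v w : ℕ → ℝ} (h : x =o[atTop] v) (hv : ∀ k, 0 ≤ v k)
    (hw : ∀ k, 0 ≤ w k) : x =o[atTop] fun k => v k + w k :=
  h.trans_le fun k => by
    rw [Real.norm_of_nonneg (hv k), Real.norm_of_nonneg (add_nonneg (hv k) (hw k))]
    exact le_add_of_nonneg_right (hw k)

lemma tendsto_natCast_smul_inv_succ_smul {E : Type*} [AddCommGroup E] [Module ℝ E]
    [TopologicalSpace E] [ContinuousSMul ℝ E] (B : E) :
    Tendsto (fun k : ℕ => (k : ℝ) • ((k : ℝ) + 1)⁻¹ • B) atTop (𝓝 B) := by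
  simpa [smul_smul, div_eq_mul_inv] using
    (tendsto_natCast_div_add_atTop (1 : ℝ)).smul_const B

variable {ι : Type*} [Fintype ι] {S L : Matrix ι ι ℝ} {Φ N : ℕ → ι → ℝ}

lemma clock_loss_sub_isLittleO (B : Matrix ι ι ℝ) (N : ℕ → ι → ℝ) :
    (fun k : ℕ => N k ⬝ᵥ (((k : ℝ) + 1)⁻¹ • B) *ᵥ N k -
      N k ⬝ᵥ ((((k + 1 : ℕ) : ℝ) + 1)⁻¹ • B) *ᵥ N k -
      scaledForm B N N k / (k + 1)) =o[atTop] fun k : ℕ =>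
        N k ⬝ᵥ (((k : ℝ) + 1)⁻¹ • B) *ᵥ N k - N k ⬝ᵥ ((((k + 1 : ℕ) : ℝ) + 1)⁻¹ • B) *ᵥ N k := by
  have hdecay : (fun k : ℕ => -(1 / ((k : ℝ) + 1))) =o[atTop] fun _ => (1 : ℝ) :=
    (isLittleO_one_iff ℝ).2 (by simpa using (tendsto_one_div_add_atTop_nhds_zero_nat (𝕜 := ℝ)).neg)
  refine (hdecay.mul_isBigO (isBigO_refl (fun k : ℕ => N k ⬝ᵥ (((k : ℝ) + 1)⁻¹ • B) *ᵥ N k -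
    N k ⬝ᵥ ((((k + 1 : ℕ) : ℝ) + 1)⁻¹ • B) *ᵥ N k) atTop)).congr (fun k => ?_) fun k => one_mul _
  simp only [smul_mulVec, dotProduct_smul, smul_eq_mul, scaledForm]
  push_cast
  field_simp
  ring

variable [DecidableEq ι]

lemma traceClock_loss_sub_isLittleO [Nonempty ι] (hL : L.PosDef)
    (h : Tendsto (fun k : ℕ => (k : ℝ)⁻¹ • infoMatrix S Φ k) atTop (𝓝 L)) (N : ℕ → ι → ℝ) :
    (fun k => N k ⬝ᵥ ((traceClock L Φ k)⁻¹ • L⁻¹) *ᵥ N k -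
      N k ⬝ᵥ ((traceClock L Φ (k + 1))⁻¹ • L⁻¹) *ᵥ N k -
      scaledForm L⁻¹ Φ Φ k * scaledForm L⁻¹ N N k / Fintype.card ι) =o[atTop]
        fun k => scaledForm L⁻¹ Φ Φ k * scaledForm L⁻¹ N N k := by
  have hr := isAsymptoticTo_scaledForm hL.inv (tendsto_natCast_smul_inv_traceClock hL h) N Φ
  refine ((hr.quadratic_isEquivalent.mul hr.isEquivalent).isLittleO.const_mul_left
    (Fintype.card ι : ℝ)⁻¹).congr_left fun k => ?_
  simp only [Pi.sub_apply, Pi.mul_apply, quadratic_mul_energy_eq_card_mul_loss hL Φ N k]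
  field_simp

lemma infoMatrix_inv_loss_sub_isLittleO (hS : S.PosDef) (hL : L.PosDef)
    (h : Tendsto (fun k : ℕ => (k : ℝ)⁻¹ • infoMatrix S Φ k) atTop (𝓝 L)) (N : ℕ → ι → ℝ) :
    (fun k => N k ⬝ᵥ (infoMatrix S Φ k)⁻¹ *ᵥ N k - N k ⬝ᵥ (infoMatrix S Φ (k + 1))⁻¹ *ᵥ N k -
      scaledForm L⁻¹ Φ N k ^ 2) =o[atTop]
        fun k => scaledForm L⁻¹ Φ Φ k * scaledForm L⁻¹ N N k := by
  have hlim := tendsto_natCast_smul_infoMatrix_inv hS hL h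
  have hr := isAsymptoticTo_scaledForm hL.inv hlim N Φ
  have hfactor : (fun k => Φ k ⬝ᵥ (infoMatrix S Φ k)⁻¹ *ᵥ Φ k) =o[atTop] fun _ => (1 : ℝ) :=
    (isLittleO_one_iff ℝ).2 <| (dotProduct_mulVec_isEquivalent_scaledForm hL.inv
      (tendsto_succ_smul hlim) Φ).symm.tendsto_nhds (tendsto_scaledForm_zero hL h)
  have hg := (hr.sq_linear_sub.isBigO.add hr.sq_linear_isBigO).congr_left
    fun k => sub_add_cancel _ _
  refine (hr.sq_linear_sub.add ((hfactor.mul_isBigO hg).congr_right fun _ => one_mul _)).congr_left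
    fun k => ?_
  rw [dotProduct_infoMatrix_inv_sub hS]
  ring

end Balances

section LogarithmicAverages

variable {Ω ι : Type*} {m0 : MeasurableSpace Ω} {μ : Measure Ω} {F : Filtration ℕ m0}
  [Fintype ι] [DecidableEq ι] [Nonempty ι] {e : ℕ → Ω → ℝ} {Φ N : ℕ → Ω → ι → ℝ}
  {S L : Matrix ι ι ℝ} {σ a : ℝ} {p : ℕ}

theorem IsRegressionWalk.sum_scaledForm_pow_sub_isLittleO [IsFiniteMeasure μ]
    (hN : IsRegressionWalk F μ σ a S L e Φ N) (ha : 2 * p < a) :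
    ∀ᵐ ω ∂μ, (fun n => ∑ k ∈ range n, scaledForm L⁻¹ (N · ω) (N · ω) k ^ p / (k + 1) -
      (∏ i ∈ range p, σ ^ 2 * (Fintype.card ι + 2 * i)) * harmonicScale n)
        =o[atTop] harmonicScale := by
  have hB := hN.posDef_limit.inv
  have hnonneg (ω : Ω) (k : ℕ) :
      0 ≤ scaledForm L⁻¹ (Φ · ω) (Φ · ω) k * scaledForm L⁻¹ (N · ω) (N · ω) k :=
    mul_nonneg (scaledForm_self_nonneg hB.posSemidef _ k)
      (scaledForm_self_nonneg hB.posSemidef _ k)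
  have hloss {W : ℕ → Ω → Matrix ι ι ℝ} (hW : IsDecreasingWeight F W) (ω : Ω) (k : ℕ) :
      0 ≤ N k ω ⬝ᵥ W k ω *ᵥ N k ω - N k ω ⬝ᵥ W (k + 1) ω *ᵥ N k ω :=
    sub_nonneg.2 ((hN.isQuadraticRecursion hW).const_le k ω)
  have hclock := hN.energyImbalance_isLittleO ha hN.isDecreasingWeight_clock
    (.of_forall fun _ => tendsto_natCast_smul_inv_succ_smul L⁻¹)
    (.of_forall fun ω => by
      simpa only [add_comm] using isLittleO_add_of_nonneg (clock_loss_sub_isLittleO L⁻¹ (N · ω))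
        (hloss hN.isDecreasingWeight_clock ω) (hnonneg ω))
  have htrace := hN.energyImbalance_isLittleO ha hN.isDecreasingWeight_traceClock
    (hN.tendsto_infoMatrix.mono fun _ => tendsto_natCast_smul_inv_traceClock hN.posDef_limit)
    (hN.tendsto_infoMatrix.mono fun ω h => isLittleO_add_of_nonneg
      (traceClock_loss_sub_isLittleO hN.posDef_limit h (N · ω)) (hnonneg ω)
      (hloss hN.isDecreasingWeight_traceClock ω))
  have hgram := hN.energyImbalance_isLittleO ha hN.isDecreasingWeight_infoMatrix
    hN.tendsto_natCast_smul_inv_infoMatrix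
    (hN.tendsto_infoMatrix.mono fun ω h => isLittleO_add_of_nonneg
      (infoMatrix_inv_loss_sub_isLittleO hN.posDef hN.posDef_limit h (N · ω)) (hnonneg ω)
      (hloss hN.isDecreasingWeight_infoMatrix ω))
  filter_upwards [hN.tendsto_infoMatrix, hclock, htrace, hgram] with ω hlim hclock htrace hgram
  exact sum_pow_div_sub_isLittleO (by simp) (sum_scaledForm_sub_isLittleO hN.posDef_limit hlim)
    hclock htrace hgram le_rfl

end LogarithmicAverages

section Estimation

lemma sum_pow_pred_mul_pow_sub_isLittleO {q u : ℕ → ℝ} {κ : ℝ} {p : ℕ} (hp : p ≠ 0)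
    (hu : ∀ k, 0 ≤ u k) (hq : (fun k : ℕ => k * q k) ~[atTop] u)
    (h : (fun n => ∑ k ∈ range n, u k ^ p / (k + 1) - κ * harmonicScale n)
      =o[atTop] harmonicScale) :
    (fun n => ∑ k ∈ range n, (k : ℝ) ^ (p - 1) * q k ^ p - κ * harmonicScale n)
      =o[atTop] harmonicScale := by
  have hratio : (fun k : ℕ => (k : ℝ)) ~[atTop] fun k => (k : ℝ) + 1 :=
    (IsEquivalent.refl.add_const_of_norm_tendsto_atTop
      (tendsto_norm_atTop_atTop.comp tendsto_natCast_atTop_atTop)).symm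
  have hterm : (fun k : ℕ => (k : ℝ) ^ (p - 1) * q k ^ p) ~[atTop]
      fun k : ℕ => u k ^ p / (k + 1) := by
    refine ((hq.pow p).div hratio).congr_left ?_
    filter_upwards [eventually_ne_atTop 0] with k hk
    have hk' : (k : ℝ) ≠ 0 := Nat.cast_ne_zero.2 hk
    simp only [Pi.pow_apply, Pi.div_apply]
    rw [mul_pow, ← mul_pow_sub_one hp (k : ℝ)]
    field_simp
  have hsum : (fun n => ∑ k ∈ range n, u k ^ p / (k + 1)) =O[atTop] harmonicScale :=
    (h.isBigO.add (isBigO_const_mul_self κ _ _)).congr_left fun n => sub_add_cancel _ _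
  refine ((isScale_harmonicScale.sum_isLittleO
    (fun k => div_nonneg (pow_nonneg (hu k) p) (by positivity)) hsum hterm).add h).congr_left
      fun n => ?_
  simp only [Pi.sub_apply, sum_sub_distrib]
  ring

lemma harmonicScale_succ_isEquivalent_log :
    (fun n => harmonicScale (n + 1)) ~[atTop] fun n : ℕ => Real.log n := by
  have hinc : (fun n : ℕ => ((n : ℝ) + 1)⁻¹) =o[atTop] harmonicScale :=
    (by simpa using tendsto_one_div_add_atTop_nhds_zero_nat (𝕜 := ℝ) :
      Tendsto (fun n : ℕ => ((n : ℝ) + 1)⁻¹) atTop (𝓝 0)).isBigO_one ℝ |>.trans_isLittleO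
        (isScale_harmonicScale.const_isLittleO 1)
  exact ((IsEquivalent.refl.add_isLittleO hinc).congr_left (.of_forall fun n =>
    (harmonicScale_succ n).symm)).trans harmonicScale_isEquivalent_log

lemma tendsto_inv_log_mul_sum_Icc {x : ℕ → ℝ} {κ : ℝ}
    (h : (fun n => ∑ k ∈ range n, x k - κ * harmonicScale n) =o[atTop] harmonicScale) :
    Tendsto (fun n : ℕ => (Real.log n)⁻¹ * ∑ k ∈ Icc 1 n, x k) atTop (𝓝 κ) := by
  have hlog := harmonicScale_succ_isEquivalent_log
  have hsum : (fun n : ℕ => ∑ k ∈ Icc 1 n, x k - κ * Real.log n) =o[atTop]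
      fun n : ℕ => Real.log n := by
    have hconst : (fun _ => x 0) =o[atTop] fun n : ℕ => Real.log n :=
      isLittleO_const_left.2 (.inr (tendsto_norm_atTop_atTop.comp tendsto_log_natCast_atTop))
    refine (((h.comp_tendsto (tendsto_add_atTop_nat 1)).trans_isBigO hlog.isBigO).add
      (hlog.isLittleO.const_mul_left κ) |>.sub hconst).congr_left fun n => ?_
    rw [← Ico_add_one_right_eq_Icc, sum_Ico_eq_sub _ (by lia)]
    simp only [Function.comp_apply, Pi.sub_apply, sum_range_one]
    ring
  have hlim := hsum.tendsto_div_nhds_zero.add_const κ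
  rw [zero_add] at hlim
  refine hlim.congr' ?_
  filter_upwards [tendsto_log_natCast_atTop.eventually_ne_atTop 0] with n hn
  field_simp
  ring

variable {ι : Type*} [Fintype ι]

lemma natCast_mul_dotProduct_mulVec_isEquivalent [DecidableEq ι] {L : Matrix ι ι ℝ} (hL : L.PosDef)
    {C : ℕ → Matrix ι ι ℝ} (hC : ∀ k, (C k).IsHermitian)
    (hlim : Tendsto (fun k : ℕ => (k : ℝ) • C k) atTop (𝓝 L⁻¹)) (N : ℕ → ι → ℝ) :
    (fun k : ℕ => k * ((C k *ᵥ N k) ⬝ᵥ L *ᵥ (C k *ᵥ N k))) ~[atTop] scaledForm L⁻¹ N N := by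
  have hsandwich : Tendsto (fun k : ℕ => (k : ℝ) • ((k : ℝ) • (C k * L * C k))) atTop
      (𝓝 L⁻¹) := by
    have hmul := (hlim.mul_const L).mul hlim
    rw [nonsing_inv_mul _ ((isUnit_iff_isUnit_det L).1 hL.isUnit), one_mul] at hmul
    refine hmul.congr fun k => ?_
    rw [Matrix.smul_mul, Matrix.smul_mul, Matrix.mul_smul]
  refine (dotProduct_mulVec_isEquivalent_scaledForm hL.inv (tendsto_succ_smul hsandwich) N
    ).congr_left (.of_forall fun k => ?_)
  dsimp only
  rw [smul_mulVec, dotProduct_smul, smul_eq_mul, ← mulVec_mulVec, ← mulVec_mulVec,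
    dotProduct_mulVec_comm (hC k), dotProduct_comm]

lemma sum_sq_le_mul_dotProduct_mulVec [DecidableEq ι] {L : Matrix ι ι ℝ} (hL : L.PosDef)
    (x : ι → ℝ) :
    ∑ i, x i ^ 2 ≤ L⁻¹.trace * (x ⬝ᵥ L *ᵥ x) := by
  rw [trace, sum_mul]
  refine sum_le_sum fun i _ => ?_
  have h := pow_le_pow_left₀ (abs_nonneg _) (abs_apply_le_mul_sqrt hL x i) 2
  rwa [sq_abs, mul_pow, Real.sq_sqrt hL.inv.posSemidef.diag_nonneg,
    Real.sq_sqrt (dotProduct_mulVec_self_nonneg hL.posSemidef x)] at h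

lemma sum_mul_pow_isBigO_log {x : ℕ → ι → ℝ} {w : ℕ → ℝ} (hw : ∀ k, 0 ≤ w k)
    {L : Matrix ι ι ℝ} (hL : L.PosDef) {p : ℕ} {κ : ℝ}
    (h : Tendsto (fun n : ℕ => (Real.log n)⁻¹ *
      ∑ k ∈ Icc 1 n, w k * (x k ⬝ᵥ L *ᵥ x k) ^ p) atTop (𝓝 κ)) :
    (fun n : ℕ => ∑ k ∈ Icc 1 n, w k * (∑ i, x k i ^ 2) ^ p) =O[atTop]
      fun n : ℕ => Real.log n := by
  classical
  have hlog : (fun n : ℕ => ∑ k ∈ Icc 1 n, w k * (x k ⬝ᵥ L *ᵥ x k) ^ p) =O[atTop]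
      fun n : ℕ => Real.log n := by
    refine isBigO_of_div_tendsto_nhds ?_ κ (h.congr fun n => by rw [Pi.div_apply, div_eq_inv_mul])
    filter_upwards [tendsto_log_natCast_atTop.eventually_ne_atTop 0] with n hn hn'
    exact absurd hn' hn
  refine .trans (.of_bound (L⁻¹.trace ^ p) (.of_forall fun n => ?_)) hlog
  rw [Real.norm_of_nonneg (sum_nonneg fun k _ => mul_nonneg (hw k) (by positivity))]
  refine le_trans ?_ (mul_le_mul_of_nonneg_left (Real.le_norm_self _)
    (pow_nonneg hL.inv.posSemidef.trace_nonneg p))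
  rw [mul_sum]
  refine sum_le_sum fun k _ => ?_
  rw [mul_left_comm, ← mul_pow]
  gcongr
  · exact hw k
  · exact sum_sq_le_mul_dotProduct_mulVec hL (x k)

variable {Ω : Type*} {m0 : MeasurableSpace Ω} {μ : Measure Ω} {F : Filtration ℕ m0}
  [DecidableEq ι] {e : ℕ → Ω → ℝ} {Φ N : ℕ → Ω → ι → ℝ} {S L : Matrix ι ι ℝ} {σ a : ℝ} {p : ℕ}

theorem IsRegressionWalk.tendsto_inv_log_mul_sum [IsFiniteMeasure μ] [Nonempty ι]
    (hN : IsRegressionWalk F μ σ a S L e Φ N) (ha : 2 * p < a) (hp : p ≠ 0) :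
    ∀ᵐ ω ∂μ, Tendsto (fun n : ℕ => (Real.log n)⁻¹ * ∑ k ∈ Icc 1 n, (k : ℝ) ^ (p - 1) *
      (((infoMatrix S (Φ · ω) k)⁻¹ *ᵥ N k ω) ⬝ᵥ
        L *ᵥ ((infoMatrix S (Φ · ω) k)⁻¹ *ᵥ N k ω)) ^ p) atTop
      (𝓝 (∏ i ∈ range p, σ ^ 2 * (Fintype.card ι + 2 * i))) := by
  filter_upwards [hN.sum_scaledForm_pow_sub_isLittleO ha, hN.tendsto_natCast_smul_inv_infoMatrix]
    with ω hsum hlim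
  exact tendsto_inv_log_mul_sum_Icc <| sum_pow_pred_mul_pow_sub_isLittleO hp
    (scaledForm_self_nonneg hN.posDef_limit.inv.posSemidef _)
    (natCast_mul_dotProduct_mulVec_isEquivalent hN.posDef_limit
      (fun k => (posDef_infoMatrix hN.posDef _ k).inv.isHermitian) hlim (N · ω)) hsum

end Estimation

section LeastSquares

variable {Ω : Type*} {d : ℕ} {S L : Matrix (Fin d) (Fin d) ℝ} {ε : ℕ → Ω → ℝ}
  {Φ : ℕ → Ω → Fin d → ℝ} {θ : Fin d → ℝ}

/-- The walk `∑_{l < k} ε_{l+1} Φ_l - S θ` of weighted noise, shifted by the bias of the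
regularization `S`: the information matrix maps the estimation error to it. -/
def scoreWalk (S : Matrix (Fin d) (Fin d) ℝ) (ε : ℕ → Ω → ℝ) (Φ : ℕ → Ω → Fin d → ℝ)
    (θ : Fin d → ℝ) (k : ℕ) (ω : Ω) : Fin d → ℝ :=
  ∑ l ∈ range k, ε (l + 1) ω • Φ l ω - S *ᵥ θ

lemma lsq_sub_eq_mulVec_scoreWalk (hS : S.PosDef) {X : ℕ → Ω → ℝ}
    (hmodel : ∀ n ω, X (n + 1) ω = θ ⬝ᵥ Φ n ω + ε (n + 1) ω) {k : ℕ} (hk : 1 ≤ k) (ω : Ω) :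
    lsq S Φ X k ω - θ = (infoMatrix S (Φ · ω) k)⁻¹ *ᵥ scoreWalk S ε Φ θ k ω := by
  have hnormal : ∑ l ∈ Icc 1 k, X l ω • Φ (l - 1) ω =
      infoMatrix S (Φ · ω) k *ᵥ θ + scoreWalk S ε Φ θ k ω := by
    have hterm (l : ℕ) : X (l + 1) ω • Φ l ω =
        vecMulVec (Φ l ω) (Φ l ω) *ᵥ θ + ε (l + 1) ω • Φ l ω := by
      rw [hmodel, vecMulVec_mulVec, op_smul_eq_smul, dotProduct_comm, add_smul]
    rw [← Ico_add_one_right_eq_Icc, sum_Ico_eq_sum_range, infoMatrix, scoreWalk, add_mulVec,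
      Matrix.sum_mulVec]
    simp only [add_comm 1, Nat.add_sub_cancel, hterm, sum_add_distrib]
    abel
  have hunit := (isUnit_iff_isUnit_det _).1 (posDef_infoMatrix hS (Φ · ω) k).isUnit
  have hSmat : Smat S Φ (k - 1) ω = infoMatrix S (Φ · ω) k := by
    rw [Smat, infoMatrix, Nat.sub_add_cancel hk]
  rw [lsq, hSmat, hnormal, mulVec_add, mulVec_mulVec, nonsing_inv_mul _ hunit, one_mulVec,
    add_sub_cancel_left]

lemma tendsto_natCast_inv_smul_infoMatrix {ω : Ω}
    (h : Tendsto (fun n : ℕ => (n : ℝ)⁻¹ • Smat S Φ n ω) atTop (𝓝 L)) :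
    Tendsto (fun k : ℕ => (k : ℝ)⁻¹ • infoMatrix S (Φ · ω) k) atTop (𝓝 L) := by
  have hlim := (tendsto_natCast_div_add_atTop (1 : ℝ)).smul h
  rw [one_smul] at hlim
  refine (tendsto_add_atTop_iff_nat 1).1 (hlim.congr' ?_)
  filter_upwards [eventually_ne_atTop 0] with n hn
  have hn' : (n : ℝ) ≠ 0 := Nat.cast_ne_zero.2 hn
  rw [smul_smul, Nat.cast_succ, div_mul_eq_mul_div, mul_inv_cancel₀ hn', one_div]
  rfl

variable {m0 : MeasurableSpace Ω} {F : Filtration ℕ m0}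

lemma isNoiseDrivenWalk_scoreWalk (hε : ∀ n, StronglyMeasurable[F n] (ε n))
    (hΦ : ∀ n, StronglyMeasurable[F n] (Φ n)) (S : Matrix (Fin d) (Fin d) ℝ) (θ : Fin d → ℝ) :
    IsNoiseDrivenWalk F (fun k => ε (k + 1)) Φ (scoreWalk S ε Φ θ) where
  stronglyMeasurable_zero := by
    have h : scoreWalk S ε Φ θ 0 = fun _ => -(S *ᵥ θ) := funext fun _ => by simp [scoreWalk]
    exact h ▸ stronglyMeasurable_const
  stronglyMeasurable_direction := hΦ
  stronglyMeasurable_noise k := hε (k + 1)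
  step k ω := by simp only [scoreWalk, sum_range_succ, add_sub_right_comm]

lemma prod_range_eq_mul_prod_Icc (σ c : ℝ) {p : ℕ} (hp : 1 ≤ p) :
    ∏ i ∈ range p, σ ^ 2 * (c + 2 * i) =
      c * σ ^ (2 * p) * ∏ j ∈ Icc 1 (p - 1), (c + 2 * j) := by
  obtain ⟨m, rfl⟩ := Nat.exists_eq_add_of_le' hp
  rw [prod_mul_distrib, prod_const, card_range, ← pow_mul, prod_range_succ', Nat.add_sub_cancel,
    ← Ico_add_one_right_eq_Icc, prod_Ico_eq_prod_range, Nat.add_sub_cancel]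
  simp only [add_comm 1]
  push_cast
  ring

end LeastSquares

/-- **Corollary 3, second part**: if `S_n/n → L` a.s. then a.s.
`(1/log n) ∑_{k=1}^n k^{p-1} ((θ̂_k - θ)ᵗ L (θ̂_k - θ))^p → ℓ(p)`; in particular the
cumulative estimation error `G_n(p) = ∑_{k=1}^n k^{p-1} ‖θ̂_k - θ‖^{2p}` is `O(log n)` a.s. -/
theorem cumulative_estimation_error_limit
    {Ω : Type*} {m0 : MeasurableSpace Ω} {μ : Measure Ω} [IsProbabilityMeasure μ]
    (F : Filtration ℕ m0) {d : ℕ} (hd : 0 < d)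
    (ε : ℕ → Ω → ℝ) (Φ : ℕ → Ω → Fin d → ℝ) (X : ℕ → Ω → ℝ) (θ : Fin d → ℝ)
    (S L : Matrix (Fin d) (Fin d) ℝ) (hS : S.PosDef) (hL : L.PosDef)
    (σ : ℝ) (p : ℕ) (hp : 1 ≤ p) (a : ℝ) (ha : 2 * p < a)
    (hmodel : ∀ n ω, X (n + 1) ω = θ ⬝ᵥ Φ n ω + ε (n + 1) ω)
    (hεadapt : ∀ n, StronglyMeasurable[F n] (ε n))
    (hεint : ∀ n, Integrable (ε n) μ)
    (hΦadapt : ∀ n, StronglyMeasurable[F n] (Φ n))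
    (hXadapt : ∀ n, StronglyMeasurable[F n] (X n))
    (hmds : ∀ n, μ[ε (n + 1)|F n] =ᵐ[μ] 0)
    (hvar : ∀ n, μ[fun ω => ε (n + 1) ω ^ 2|F n] =ᵐ[μ] fun _ => σ ^ 2)
    (hmomint : ∀ n, Integrable (fun ω => |ε (n + 1) ω| ^ a) μ)
    (hmom : ∀ᵐ ω ∂μ, ∃ C : ℝ, ∀ n, (μ[fun ω => |ε (n + 1) ω| ^ a|F n]) ω ≤ C)
    (hf0 : ∀ᵐ ω ∂μ, Tendsto (fun n => expl S Φ n ω) atTop (𝓝 0))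
    (hconv : ∀ᵐ ω ∂μ, Tendsto (fun n : ℕ => (n : ℝ)⁻¹ • Smat S Φ n ω) atTop (𝓝 L)) :
    (∀ᵐ ω ∂μ, Tendsto (fun n : ℕ =>
      (Real.log n)⁻¹ *
        ∑ k ∈ Finset.Icc 1 n,
          (k : ℝ) ^ (p - 1) *
            ((lsq S Φ X k ω - θ) ⬝ᵥ (L *ᵥ (lsq S Φ X k ω - θ))) ^ p)
      atTop
        (𝓝 ((d : ℝ) * σ ^ (2 * p) *
          ∏ j ∈ Finset.Icc 1 (p - 1), ((d : ℝ) + 2 * (j : ℝ))))) ∧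
      ∀ᵐ ω ∂μ, (fun n : ℕ =>
          ∑ k ∈ Finset.Icc 1 n,
            (k : ℝ) ^ (p - 1) * (∑ i, (lsq S Φ X k ω i - θ i) ^ 2) ^ p) =O[atTop]
        fun n : ℕ => Real.log n := by
  have : Nonempty (Fin d) := ⟨⟨0, hd⟩⟩
  have hwalk : IsRegressionWalk F μ σ a S L (fun k => ε (k + 1)) Φ (scoreWalk S ε Φ θ) :=
    { isNoiseDrivenWalk_scoreWalk hεadapt hΦadapt S θ with
      isNoise := ⟨fun k => hεadapt (k + 1), hmds, hvar, hmomint, hmom⟩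
      posDef := hS
      posDef_limit := hL
      tendsto_infoMatrix := hconv.mono fun _ => tendsto_natCast_inv_smul_infoMatrix }
  have hlim : ∀ᵐ ω ∂μ, Tendsto (fun n : ℕ => (Real.log n)⁻¹ * ∑ k ∈ Icc 1 n, (k : ℝ) ^ (p - 1) *
      ((lsq S Φ X k ω - θ) ⬝ᵥ (L *ᵥ (lsq S Φ X k ω - θ))) ^ p) atTop
      (𝓝 (d * σ ^ (2 * p) * ∏ j ∈ Icc 1 (p - 1), (d + 2 * (j : ℝ)))) := by
    filter_upwards [hwalk.tendsto_inv_log_mul_sum ha (Nat.one_le_iff_ne_zero.1 hp)] with ω h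
    rw [Fintype.card_fin, prod_range_eq_mul_prod_Icc σ d hp] at h
    refine h.congr fun n => congrArg _ (sum_congr rfl fun k hk => ?_)
    rw [lsq_sub_eq_mulVec_scoreWalk hS hmodel (mem_Icc.1 hk).1]
  exact ⟨hlim, hlim.mono fun ω h => sum_mul_pow_isBigO_log (fun k => by positivity) hL h⟩
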